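/- arXiv:1104.4562 — 3 statements merged into one kernel-verified Lean document; each statement's English description precedes it below -/
import Mathlib

section
/- Let γ ∈ [0,1) and let O ⊆ ℝ² be a nonempty bounded, simply connected open set with C^∞ smooth boundary. If u is a γ-torsion function of O, then ∫_O u^{1+γ} dA ≤ ((1+γ)/(8π)) · (∫_O u^γ dA)². (This is the Euclidean case τ = 4π of the paper's optimal isoperimetric inequality (2.1).) -/
open MeasureTheory Real

/-- The Euclidean Laplacian on `ℝ²` (realized as `EuclideanSpace ℝ (Fin 2)`). -/
noncomputable def lap (u : EuclideanSpace ℝ (Fin 2) → ℝ) (x : EuclideanSpace ℝ (Fin 2)) : ℝ :=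
  ∑ i : Fin 2, fderiv ℝ (fderiv ℝ u) x (EuclideanSpace.single i 1) (EuclideanSpace.single i 1)

/-- `O` has `C^∞` smooth boundary: near each boundary point, `O` is the sublevel set of a
smooth function with nonvanishing gradient. -/
def SmoothBoundary (O : Set (EuclideanSpace ℝ (Fin 2))) : Prop :=
  ∀ x ∈ frontier O, ∃ (U : Set (EuclideanSpace ℝ (Fin 2))) (φ : EuclideanSpace ℝ (Fin 2) → ℝ),
    IsOpen U ∧ x ∈ U ∧ ContDiff ℝ (⊤ : ℕ∞) φ ∧ (∀ y ∈ U, fderiv ℝ φ y ≠ 0) ∧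
      O ∩ U = {y | φ y < 0} ∩ U

/-- `u` is a `γ`-torsion function of `O`: continuous on the closure, `C¹` up to the boundary,
`C²` inside, with `Δu = -u^γ`, `u > 0` in `O` and `u = 0` on `∂O`. -/
def IsTorsionFn (γ : ℝ) (O : Set (EuclideanSpace ℝ (Fin 2)))
    (u : EuclideanSpace ℝ (Fin 2) → ℝ) : Prop :=
  ContinuousOn u (closure O) ∧ ContDiffOn ℝ 1 u (closure O) ∧ ContDiffOn ℝ 2 u O ∧
  (∀ x ∈ O, lap u x = -(u x ^ γ)) ∧ (∀ x ∈ O, 0 < u x) ∧ (∀ x ∈ frontier O, u x = 0)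

/-!
Extend `u` by zero to `v`, and put `μ(t) = |{v > t}|` and `Φ(t) = ∫_{v > t} u ^ γ`. By the
divergence theorem `Φ(t)` is the flux `∫_{v = t} |∇v|`, so Cauchy-Schwarz and the isoperimetric
inequality give `4π μ(t) ≤ Per(v > t)² ≤ Φ(t) · (-μ'(t))`. Multiplying by `t ^ γ` and integrating
over `t`, the left-hand side becomes `4π / (1 + γ) · ∫ u ^ (1 + γ)` by the layer-cake formula, while
the right-hand side is `∫ Φ · (-dΦ) = Φ(0)² / 2`.

Perimeters and level-set integrals never appear: the isoperimetric inequality is used in its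
Brunn-Minkowski form, a lower bound for the area of the `ε`-shell around an open set, and integrals
over levels are turned into integrals over the plane by Fubini's theorem before Cauchy-Schwarz is
applied pointwise, as Young's inequality `2a ≤ a² / Φ + Φ` at the level `t = v x`.
-/

open scoped Pointwise ENNReal NNReal Topology Laplacian

theorem antitone_measure_superlevel {α β : Type*} [MeasurableSpace α] [Preorder β]
    (μ : Measure α) (f : α → β) : Antitone fun t ↦ μ {x | t < f x} :=
  fun _ _ hst ↦ measure_mono fun _ hx ↦ hst.trans_lt hx

theorem measurable_measure_superlevel {α : Type*} [MeasurableSpace α] (μ : Measure α) (f : α → ℝ) :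
    Measurable fun t ↦ μ {x | t < f x} :=
  (antitone_measure_superlevel μ f).measurable

/-! ### Brunn-Minkowski inequality in the plane -/

section BrunnMinkowski

theorem volume_add_volume_le_volume_add_of_isCompact {K L : Set ℝ} (hK : IsCompact K)
    (hL : IsCompact L) (hKn : K.Nonempty) (hLn : L.Nonempty) :
    volume K + volume L ≤ volume (K + L) := by
  obtain ⟨a, haK, ha⟩ := hK.exists_isGreatest hKn
  obtain ⟨b, hbL, hb⟩ := hL.exists_isLeast hLn
  have hsub : (K + {b}) ∪ ({a} + L) ⊆ K + L :=
    Set.union_subset (Set.add_subset_add_left (by simpa using hbL))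
      (Set.add_subset_add_right (by simpa using haK))
  have hdisj : AEDisjoint volume (K + {b}) ({a} + L) := by
    refine measure_mono_null (t := {a + b}) ?_ (by simp)
    rw [Set.add_singleton, Set.singleton_add]
    rintro _ ⟨⟨k, hk, rfl⟩, l, hl, hkl⟩
    have := ha hk
    have := hb hl
    simp only [Set.mem_singleton_iff] at hkl ⊢
    linarith
  have hmeas : NullMeasurableSet ({a} + L) volume :=
    (isCompact_singleton.add hL).measurableSet.nullMeasurableSet
  calc volume K + volume L = volume (K + {b}) + volume ({a} + L) := by
        simp [Set.add_singleton, Set.singleton_add, measure_preimage_add_right]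
    _ = volume ((K + {b}) ∪ ({a} + L)) := (measure_union₀ hmeas hdisj).symm
    _ ≤ volume (K + L) := measure_mono hsub

theorem volume_add_volume_le_volume_add_of_isOpen {A B : Set ℝ} (hA : IsOpen A) (hB : IsOpen B)
    (hAn : A.Nonempty) (hBn : B.Nonempty) : volume A + volume B ≤ volume (A + B) := by
  obtain ⟨a, ha⟩ := hAn
  obtain ⟨b, hb⟩ := hBn
  simp only [hA.measure_eq_iSup_isCompact volume, hB.measure_eq_iSup_isCompact volume, iSup_and']
  refine ENNReal.biSup_add_biSup_le' (p := fun K ↦ K ⊆ A ∧ IsCompact K)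
    (q := fun K ↦ K ⊆ B ∧ IsCompact K) ⟨∅, by simp⟩ ⟨∅, by simp⟩ ?_
  rintro K ⟨hKA, hK⟩ L ⟨hLB, hL⟩
  calc volume K + volume L ≤ volume (insert a K) + volume (insert b L) := by
        gcongr <;> simp
    _ ≤ volume (insert a K + insert b L) :=
        volume_add_volume_le_volume_add_of_isCompact (hK.insert a) (hL.insert b) (by simp)
          (by simp)
    _ ≤ volume (A + B) :=
        measure_mono (Set.add_subset_add (Set.insert_subset ha hKA) (Set.insert_subset hb hLB))

/-- The length of the vertical section `{y | (x, y) ∈ A}` of a planar set, as a real number; it is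
only used for bounded `A`, where the length is finite. -/
noncomputable def sectionLength (A : Set (ℝ × ℝ)) (x : ℝ) : ℝ := volume.real (Prod.mk x ⁻¹' A)

variable {A B : Set (ℝ × ℝ)} {a b : ℝ}

theorem sectionLength_nonneg (A : Set (ℝ × ℝ)) (x : ℝ) : 0 ≤ sectionLength A x := measureReal_nonneg

theorem isBounded_section (hb : Bornology.IsBounded A) (x : ℝ) :
    Bornology.IsBounded (Prod.mk x ⁻¹' A) :=
  hb.image_snd.subset fun y hy ↦ ⟨(x, y), hy, rfl⟩

theorem isOpen_section (hA : IsOpen A) (x : ℝ) : IsOpen (Prod.mk x ⁻¹' A) :=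
  hA.preimage (by fun_prop)

theorem ofReal_sectionLength (hb : Bornology.IsBounded A) (x : ℝ) :
    ENNReal.ofReal (sectionLength A x) = volume (Prod.mk x ⁻¹' A) :=
  ofReal_measureReal (isBounded_section hb x).measure_lt_top.ne

theorem measurable_sectionLength (hA : MeasurableSet A) : Measurable (sectionLength A) :=
  (measurable_measure_prodMk_left hA).ennreal_toReal

theorem nonempty_section_of_sectionLength_pos {x : ℝ} (h : 0 < sectionLength A x) :
    (Prod.mk x ⁻¹' A).Nonempty := by
  by_contra hne
  simp [sectionLength, Set.not_nonempty_iff_eq_empty.mp hne] at h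

theorem lowerSemicontinuous_sectionLength (hA : IsOpen A) (hb : Bornology.IsBounded A) :
    LowerSemicontinuous (sectionLength A) := by
  intro x t hx
  rcases lt_or_ge t 0 with ht | ht
  · exact Filter.Eventually.of_forall fun z ↦ ht.trans_le (sectionLength_nonneg A z)
  have hlt_iff (z : ℝ) : t < sectionLength A z ↔ ENNReal.ofReal t < volume (Prod.mk z ⁻¹' A) := by
    rw [← ofReal_sectionLength hb, ENNReal.ofReal_lt_ofReal_iff_of_nonneg ht]
  obtain ⟨K, hKA, hK, hlt⟩ := (isOpen_section hA x).exists_lt_isCompact ((hlt_iff x).mp hx)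
  obtain ⟨U, V, hU, -, hxU, hKV, hUV⟩ :=
    generalized_tube_lemma (isCompact_singleton (x := x)) hK hA (by
      rintro ⟨_, y⟩ ⟨rfl, hy⟩
      exact hKA hy)
  filter_upwards [hU.mem_nhds (hxU rfl)] with z hz
  exact (hlt_iff z).mpr (hlt.trans_le (measure_mono fun y hy ↦ hUV ⟨hz, hKV hy⟩))

theorem lintegral_sectionLength_div (hA : MeasurableSet A) (hb : Bornology.IsBounded A)
    (ha : 0 < a) :
    ∫⁻ x, ENNReal.ofReal (sectionLength A x / a) = volume A / ENNReal.ofReal a := by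
  simp_rw [ENNReal.ofReal_div_of_pos ha, ofReal_sectionLength hb, div_eq_mul_inv]
  rw [lintegral_mul_const _ (measurable_measure_prodMk_left hA), Measure.volume_eq_prod,
    Measure.prod_apply hA]

theorem exists_isLUB_range_sectionLength (hA : IsOpen A) (hb : Bornology.IsBounded A)
    (hn : A.Nonempty) : ∃ a, 0 < a ∧ IsLUB (Set.range (sectionLength A)) a := by
  have hbdd : BddAbove (Set.range (sectionLength A)) := by
    refine ⟨volume.real (Prod.snd '' A), ?_⟩
    rintro _ ⟨x, rfl⟩
    exact measureReal_mono (fun y hy ↦ ⟨(x, y), hy, rfl⟩) hb.image_snd.measure_lt_top.ne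
  obtain ⟨⟨x, y⟩, hxy⟩ := hn
  have hpos : 0 < sectionLength A x :=
    ENNReal.toReal_pos ((isOpen_section hA x).measure_pos volume ⟨y, hxy⟩).ne'
      (isBounded_section hb x).measure_lt_top.ne
  exact ⟨_, hpos.trans_le (le_ciSup hbdd x), isLUB_ciSup hbdd⟩

theorem sectionLength_add_sectionLength_le (hA : IsOpen A) (hB : IsOpen B)
    (hAb : Bornology.IsBounded A) (hBb : Bornology.IsBounded B) {x y : ℝ}
    (hx : (Prod.mk x ⁻¹' A).Nonempty) (hy : (Prod.mk y ⁻¹' B).Nonempty) :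
    sectionLength A x + sectionLength B y ≤ sectionLength (A + B) (x + y) := by
  have hsub : Prod.mk x ⁻¹' A + Prod.mk y ⁻¹' B ⊆ Prod.mk (x + y) ⁻¹' (A + B) := by
    rintro _ ⟨p, hp, q, hq, rfl⟩
    exact ⟨(x, p), hp, (y, q), hq, rfl⟩
  have hvol := (volume_add_volume_le_volume_add_of_isOpen (isOpen_section hA x)
    (isOpen_section hB y) hx hy).trans (measure_mono hsub)
  rwa [← ofReal_sectionLength hAb, ← ofReal_sectionLength hBb,
    ← ofReal_sectionLength (hAb.add hBb), ← ENNReal.ofReal_add (sectionLength_nonneg _ _)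
      (sectionLength_nonneg _ _), ENNReal.ofReal_le_ofReal_iff (sectionLength_nonneg _ _)] at hvol

-- After dividing by the suprema, both superlevel sets on the left are nonempty exactly when
-- `t < 1`, so the one-dimensional inequality applies to them for every relevant `t`.
theorem volume_superlevel_sectionLength_add_le (hA : IsOpen A) (hB : IsOpen B)
    (hAb : Bornology.IsBounded A) (hBb : Bornology.IsBounded B) (ha : 0 < a) (hb : 0 < b)
    (hAa : IsLUB (Set.range (sectionLength A)) a) (hBb' : IsLUB (Set.range (sectionLength B)) b)
    {t : ℝ} (ht : 0 ≤ t) :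
    volume {x | t < sectionLength A x / a} + volume {x | t < sectionLength B x / b} ≤
      volume {x | t < sectionLength (A + B) x / (a + b)} := by
  simp only [lt_div_iff₀ ha, lt_div_iff₀ hb, lt_div_iff₀ (add_pos ha hb)]
  rcases lt_or_ge t 1 with ht1 | ht1
  · have hAt : {x | t * a < sectionLength A x}.Nonempty := by
      obtain ⟨_, ⟨x, rfl⟩, hx⟩ := (lt_isLUB_iff hAa).mp (mul_lt_of_lt_one_left ha ht1)
      exact ⟨x, hx⟩
    have hBt : {x | t * b < sectionLength B x}.Nonempty := by
      obtain ⟨_, ⟨x, rfl⟩, hx⟩ := (lt_isLUB_iff hBb').mp (mul_lt_of_lt_one_left hb ht1)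
      exact ⟨x, hx⟩
    refine (volume_add_volume_le_volume_add_of_isOpen
      ((lowerSemicontinuous_sectionLength hA hAb).isOpen_preimage _)
      ((lowerSemicontinuous_sectionLength hB hBb).isOpen_preimage _) hAt hBt).trans
      (measure_mono ?_)
    rintro _ ⟨x, hx : t * a < _, y, hy : t * b < _, rfl⟩
    have hadd := sectionLength_add_sectionLength_le hA hB hAb hBb
      (nonempty_section_of_sectionLength_pos ((by positivity : 0 ≤ t * a).trans_lt hx))
      (nonempty_section_of_sectionLength_pos ((by positivity : 0 ≤ t * b).trans_lt hy))
    change t * (a + b) < _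
    linarith
  · have hAt : {x | t * a < sectionLength A x} = ∅ := Set.eq_empty_of_forall_notMem fun x ↦
      not_lt.mpr ((hAa.1 ⟨x, rfl⟩).trans (le_mul_of_one_le_left ha.le ht1))
    have hBt : {x | t * b < sectionLength B x} = ∅ := Set.eq_empty_of_forall_notMem fun x ↦
      not_lt.mpr ((hBb'.1 ⟨x, rfl⟩).trans (le_mul_of_one_le_left hb.le ht1))
    simp [hAt, hBt]

theorem volume_div_add_volume_div_le (hA : IsOpen A) (hB : IsOpen B)
    (hAb : Bornology.IsBounded A) (hBb : Bornology.IsBounded B) (ha : 0 < a) (hb : 0 < b)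
    (hAa : IsLUB (Set.range (sectionLength A)) a) (hBb' : IsLUB (Set.range (sectionLength B)) b) :
    volume A / ENNReal.ofReal a + volume B / ENNReal.ofReal b ≤
      volume (A + B) / ENNReal.ofReal (a + b) := by
  have layercake {C : Set (ℝ × ℝ)} (hC : IsOpen C) (hCb : Bornology.IsBounded C) {c : ℝ}
      (hc : 0 < c) : volume C / ENNReal.ofReal c =
        ∫⁻ t in Set.Ioi 0, volume {x | t < sectionLength C x / c} := by
    rw [← lintegral_sectionLength_div hC.measurableSet hCb hc]
    exact lintegral_eq_lintegral_meas_lt _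
      (Filter.Eventually.of_forall fun x ↦ div_nonneg (sectionLength_nonneg C x) hc.le)
      ((measurable_sectionLength hC.measurableSet).div_const c).aemeasurable
  rw [layercake hA hAb ha, layercake hB hBb hb, layercake hA.add_right (hAb.add hBb)
    (add_pos ha hb), ← lintegral_add_left (measurable_measure_superlevel _ _)]
  exact setLIntegral_mono' measurableSet_Ioi fun t ht ↦
    volume_superlevel_sectionLength_add_le hA hB hAb hBb ha hb hAa hBb' (le_of_lt ht)

theorem sqrt_add_sqrt_le_sqrt_of_div_add_div_le {α β c : ℝ} (hα : 0 ≤ α) (hβ : 0 ≤ β) (ha : 0 < a)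
    (hb : 0 < b) (h : α / a + β / b ≤ c / (a + b)) : √α + √β ≤ √c := by
  have titu : (√α + √β) ^ 2 / (a + b) ≤ √α ^ 2 / a + √β ^ 2 / b := by
    simpa using Finset.sq_sum_div_le_sum_sq_div Finset.univ ![√α, √β] (g := ![a, b])
      (by simp [Fin.forall_fin_two, ha, hb])
  rw [sq_sqrt hα, sq_sqrt hβ] at titu
  exact Real.le_sqrt_of_sq_le ((div_le_div_iff_of_pos_right (add_pos ha hb)).mp (titu.trans h))

theorem sqrt_volume_add_sqrt_volume_le_prod (hA : IsOpen A) (hB : IsOpen B)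
    (hAb : Bornology.IsBounded A) (hBb : Bornology.IsBounded B) (hAn : A.Nonempty)
    (hBn : B.Nonempty) : √(volume.real A) + √(volume.real B) ≤ √(volume.real (A + B)) := by
  obtain ⟨a, ha, hAa⟩ := exists_isLUB_range_sectionLength hA hAb hAn
  obtain ⟨b, hb, hBb'⟩ := exists_isLUB_range_sectionLength hB hBb hBn
  refine sqrt_add_sqrt_le_sqrt_of_div_add_div_le measureReal_nonneg measureReal_nonneg ha hb ?_
  have hdiv := volume_div_add_volume_div_le hA hB hAb hBb ha hb hAa hBb'
  rw [← ofReal_measureReal hAb.measure_lt_top.ne, ← ofReal_measureReal hBb.measure_lt_top.ne,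
    ← ofReal_measureReal (hAb.add hBb).measure_lt_top.ne, ← ENNReal.ofReal_div_of_pos ha,
    ← ENNReal.ofReal_div_of_pos hb, ← ENNReal.ofReal_div_of_pos (add_pos ha hb),
    ← ENNReal.ofReal_add (by positivity) (by positivity)] at hdiv
  exact (ENNReal.ofReal_le_ofReal_iff (by positivity)).mp hdiv

end BrunnMinkowski

theorem measurePreserving_finTwoArrow :
    MeasurePreserving ((PiLp.continuousLinearEquiv 2 ℝ fun _ : Fin 2 ↦ ℝ).trans
      (ContinuousLinearEquiv.finTwoArrow ℝ ℝ)) :=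
  (volume_preserving_finTwoArrow ℝ).comp (PiLp.volume_preserving_ofLp (Fin 2))

theorem sqrt_volume_add_sqrt_volume_le {A B : Set (EuclideanSpace ℝ (Fin 2))} (hA : IsOpen A)
    (hB : IsOpen B) (hAb : Bornology.IsBounded A) (hBb : Bornology.IsBounded B)
    (hAn : A.Nonempty) (hBn : B.Nonempty) :
    √(volume.real A) + √(volume.real B) ≤ √(volume.real (A + B)) := by
  set T := (PiLp.continuousLinearEquiv 2 ℝ fun _ : Fin 2 ↦ ℝ).trans
    (ContinuousLinearEquiv.finTwoArrow ℝ ℝ)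
  have isOpen_image {X : Set (EuclideanSpace ℝ (Fin 2))} (hX : IsOpen X) : IsOpen (T '' X) :=
    T.toHomeomorph.isOpenMap X hX
  have isBounded_image {X : Set (EuclideanSpace ℝ (Fin 2))} (hX : Bornology.IsBounded X) :
      Bornology.IsBounded (T '' X) := T.lipschitz.isBounded_image hX
  have volume_image {X : Set (EuclideanSpace ℝ (Fin 2))} (hX : IsOpen X) :
      volume.real (T '' X) = volume.real X := by
    rw [← measurePreserving_finTwoArrow.measureReal_preimage (isOpen_image hX).nullMeasurableSet,
      Set.preimage_image_eq _ T.injective]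
  simpa only [← Set.image_add, volume_image hA, volume_image hB, volume_image hA.add_right] using
    sqrt_volume_add_sqrt_volume_le_prod (isOpen_image hA) (isOpen_image hB) (isBounded_image hAb)
      (isBounded_image hBb) (hAn.image T) (hBn.image T)

theorem two_mul_sqrt_pi_mul_sqrt_volume_le_volume_thickening_sdiff
    {A : Set (EuclideanSpace ℝ (Fin 2))} (hA : IsOpen A) (hAb : Bornology.IsBounded A) {ε : ℝ}
    (hε : 0 < ε) :
    ENNReal.ofReal (2 * √π) * ENNReal.ofReal ε * volume A ^ (1 / 2 : ℝ) ≤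
      volume (Metric.thickening ε A \ A) := by
  rcases A.eq_empty_or_nonempty with rfl | hAn
  · simp
  have hTb : Bornology.IsBounded (Metric.thickening ε A) := hAb.thickening
  have hball : √(volume.real (Metric.ball (0 : EuclideanSpace ℝ (Fin 2)) ε)) = √π * ε := by
    rw [measureReal_def, EuclideanSpace.volume_ball_fin_two]
    simp [hε.le, pi_pos.le, mul_comm]
  have brunnMinkowski := sqrt_volume_add_sqrt_volume_le (B := Metric.ball 0 ε) hA
    Metric.isOpen_ball hAb Metric.isBounded_ball hAn (Metric.nonempty_ball.mpr hε)
  rw [add_ball_zero, hball] at brunnMinkowski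
  have hreal : 2 * √π * ε * √(volume.real A) ≤
      volume.real (Metric.thickening ε A) - volume.real A := by
    have hsq := pow_le_pow_left₀ (by positivity) brunnMinkowski 2
    rw [add_sq, sq_sqrt measureReal_nonneg, sq_sqrt measureReal_nonneg] at hsq
    linarith [sq_nonneg (√π * ε)]
  rw [measure_sdiff (Metric.self_subset_thickening hε A) hA.measurableSet.nullMeasurableSet
      hAb.measure_lt_top.ne, ← ofReal_measureReal hAb.measure_lt_top.ne,
    ← ofReal_measureReal hTb.measure_lt_top.ne, ← ENNReal.ofReal_sub _ measureReal_nonneg,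
    ENNReal.ofReal_rpow_of_nonneg measureReal_nonneg (by norm_num), ← sqrt_eq_rpow,
    ← ENNReal.ofReal_mul (by positivity), ← ENNReal.ofReal_mul (by positivity)]
  exact ENNReal.ofReal_le_ofReal hreal

/-! ### Isoperimetric inequality on superlevel sets -/

-- Fubini: a fixed `x` lies in the shell around the superlevel set of `t` only for `t` in an
-- interval of length `r x` starting at `V x`. This replaces the coarea formula.
theorem lintegral_mul_measure_thickening_superlevel_sdiff_le {X : Type*} [PseudoMetricSpace X]
    [MeasurableSpace X] [OpensMeasurableSpace X] [SecondCountableTopology X] (μ : Measure X)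
    [SFinite μ] {V r : X → ℝ} (hV : Continuous V) {m : ℝ → ℝ≥0∞} (hm : Antitone m) {ε : ℝ}
    (hr : ∀ x y, dist x y < ε → V y ≤ V x + r x) :
    ∫⁻ t, m t * μ (Metric.thickening ε {x | t < V x} \ {x | t < V x}) ≤
      ∫⁻ x, m (V x) * ENNReal.ofReal (r x) ∂μ := by
  let W : Set (ℝ × X) := {p | p.2 ∈ Metric.thickening ε {x | p.1 < V x} \ {x | p.1 < V x}}
  have hW : MeasurableSet W := by
    have hnear (y : X) : IsOpen {p : ℝ × X | p.1 < V y ∧ dist p.2 y < ε} :=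
      (isOpen_lt continuous_fst continuous_const).and (isOpen_lt (by fun_prop) continuous_const)
    have hlt : IsOpen {p : ℝ × X | p.1 < V p.2} := isOpen_lt (by fun_prop) (by fun_prop)
    convert (isOpen_iUnion hnear).measurableSet.diff hlt.measurableSet using 1
    ext p
    simp [W, Metric.mem_thickening_iff]
  have hslice (t : ℝ) (x : X) : W.indicator (fun p ↦ m p.1) (t, x) ≤
      (Set.Ico (V x) (V x + r x)).indicator (fun _ ↦ m (V x)) t := by
    by_cases hmem : (t, x) ∈ W
    · obtain ⟨hthick, hxt⟩ := hmem
      obtain ⟨y, hy, hxy⟩ := Metric.mem_thickening_iff.mp hthick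
      have hxt : V x ≤ t := not_lt.mp hxt
      rw [Set.indicator_of_mem (s := Set.Ico _ _) ⟨hxt, lt_of_lt_of_le hy (hr x y hxy)⟩]
      exact (Set.indicator_le_self _ _ _).trans (hm hxt)
    · simp [hmem]
  calc ∫⁻ t, m t * μ (Metric.thickening ε {x | t < V x} \ {x | t < V x})
      = ∫⁻ t, ∫⁻ x, W.indicator (fun p ↦ m p.1) (t, x) ∂μ := by
        refine lintegral_congr fun t ↦ ?_
        exact (lintegral_indicator_const (measurable_prodMk_left hW) (m t)).symm
    _ = ∫⁻ x, (∫⁻ t, W.indicator (fun p ↦ m p.1) (t, x)) ∂μ :=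
        lintegral_lintegral_swap (f := fun t x ↦ W.indicator (fun p ↦ m p.1) (t, x))
          ((hm.measurable.comp measurable_fst).indicator hW).aemeasurable
    _ ≤ ∫⁻ x, m (V x) * ENNReal.ofReal (r x) ∂μ := by
        refine lintegral_mono fun x ↦ (lintegral_mono fun t ↦ hslice t x).trans_eq ?_
        rw [lintegral_indicator_const measurableSet_Ico, Real.volume_Ico, add_sub_cancel_left]

section Increment

variable {E : Type*} [NormedAddCommGroup E] [NormedSpace ℝ E] {V : E → ℝ} {κ : ℝ}

theorem exists_forall_dist_lt_le_add_norm_fderiv (hV : ContDiff ℝ 1 V) (hVs : HasCompactSupport V)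
    (hκ : 0 < κ) :
    ∃ ε₀ > 0, ∀ ε ≤ ε₀, ∀ x y, dist x y < ε → V y ≤ V x + ε * (‖fderiv ℝ V x‖ + κ) := by
  have hunif : UniformContinuous (fderiv ℝ V) :=
    (hVs.fderiv (𝕜 := ℝ)).uniformContinuous_of_continuous (hV.continuous_fderiv (by simp))
  obtain ⟨ε₀, hε₀, hclose⟩ := Metric.uniformContinuous_iff.mp hunif κ hκ
  refine ⟨ε₀, hε₀, fun ε hε x y hxy ↦ ?_⟩
  have hbound : ∀ z ∈ Metric.ball x ε, ‖fderiv ℝ V z‖ ≤ ‖fderiv ℝ V x‖ + κ := fun z hz ↦ by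
    have hzx := (hclose (hz.trans_le hε)).le
    rw [dist_eq_norm] at hzx
    linarith [norm_le_norm_add_norm_sub' (fderiv ℝ V z) (fderiv ℝ V x)]
  have hmvt : ‖V y - V x‖ ≤ (‖fderiv ℝ V x‖ + κ) * ‖y - x‖ :=
    (convex_ball x ε).norm_image_sub_le_of_norm_fderiv_le
      (fun z _ ↦ (hV.differentiable (by simp)).differentiableAt) hbound
      (Metric.mem_ball_self (dist_nonneg.trans_lt hxy)) (Metric.mem_ball'.mpr hxy)
  have hyx : ‖y - x‖ ≤ ε := by rw [← dist_eq_norm, dist_comm]; exact hxy.le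
  calc V y ≤ V x + ‖V y - V x‖ := by linarith [le_norm_self (V y - V x)]
    _ ≤ V x + ε * (‖fderiv ℝ V x‖ + κ) := by rw [mul_comm ε]; gcongr; exact hmvt.trans (by gcongr)

theorem exists_pos_forall_dist_lt_le_add_indicator (hV : ContDiff ℝ 1 V)
    (hVs : HasCompactSupport V) (hκ : 0 < κ) :
    ∃ ε > 0, ∀ x y, dist x y < ε → V y ≤
      V x + ε * (‖fderiv ℝ V x‖ + (Metric.thickening 1 (tsupport V)).indicator (fun _ ↦ κ) x) := by
  obtain ⟨ε₀, hε₀, hincr⟩ := exists_forall_dist_lt_le_add_norm_fderiv hV hVs hκ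
  have hε : 0 < min ε₀ 1 := lt_min hε₀ one_pos
  refine ⟨min ε₀ 1, hε, fun x y hxy ↦ ?_⟩
  by_cases hx : x ∈ Metric.thickening 1 (tsupport V)
  · rw [Set.indicator_of_mem hx]
    exact hincr _ (min_le_left _ _) x y hxy
  · have hVx : V x = 0 := image_eq_zero_of_notMem_tsupport fun hmem ↦
      hx (Metric.self_subset_thickening one_pos _ hmem)
    have hVy : V y = 0 := image_eq_zero_of_notMem_tsupport fun hmem ↦
      hx (Metric.mem_thickening_iff.mpr ⟨y, hmem, hxy.trans_le (min_le_right _ _)⟩)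
    rw [Set.indicator_of_notMem hx, hVx, hVy]
    positivity

end Increment

theorem isBounded_superlevel {X : Type*} [PseudoMetricSpace X] {v : X → ℝ}
    (hvs : HasCompactSupport v) {t : ℝ} (ht : 0 ≤ t) : Bornology.IsBounded {x | t < v x} :=
  hvs.isCompact.isBounded.subset fun _ hx ↦ subset_tsupport v (ht.trans_lt hx).ne'

section Isoperimetry

variable {V : EuclideanSpace ℝ (Fin 2) → ℝ}

theorem lintegral_volume_superlevel_le_of_le_add (hV : Continuous V) (hVs : HasCompactSupport V)
    {ε : ℝ} (hε : 0 < ε) {r : EuclideanSpace ℝ (Fin 2) → ℝ}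
    (hr : ∀ x y, dist x y < ε → V y ≤ V x + ε * r x) :
    ENNReal.ofReal (2 * √π) * ∫⁻ t in Set.Ioi 0, volume {x | t < V x} ≤
      ∫⁻ x, volume {y | V x < V y} ^ (1 / 2 : ℝ) * ENNReal.ofReal (r x) := by
  set m : ℝ → ℝ≥0∞ := fun t ↦ volume {x | t < V x} ^ (1 / 2 : ℝ) with hm
  have hmanti : Antitone m := fun s t hst ↦
    ENNReal.rpow_le_rpow (antitone_measure_superlevel volume V hst) (by norm_num)
  have hmm (t : ℝ) : m t * m t = volume {x | t < V x} := by
    rw [hm, ← ENNReal.rpow_add_of_nonneg _ _ (by norm_num) (by norm_num)]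
    norm_num
  have hshell : ∀ t ∈ Set.Ioi (0 : ℝ),
      ENNReal.ofReal (2 * √π) * ENNReal.ofReal ε * volume {x | t < V x} ≤
        m t * volume (Metric.thickening ε {x | t < V x} \ {x | t < V x}) := fun t ht ↦ by
    have hiso := two_mul_sqrt_pi_mul_sqrt_volume_le_volume_thickening_sdiff
      (isOpen_lt continuous_const hV) (isBounded_superlevel hVs (le_of_lt ht)) hε
    rw [← hmm t, mul_left_comm]
    grw [← hiso]
  have hε0 : ENNReal.ofReal ε ≠ 0 := by simpa using hε
  rw [← ENNReal.mul_le_mul_iff_right hε0 ENNReal.ofReal_ne_top]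
  calc ENNReal.ofReal ε * (ENNReal.ofReal (2 * √π) * ∫⁻ t in Set.Ioi 0, volume {x | t < V x})
      = ∫⁻ t in Set.Ioi 0, ENNReal.ofReal (2 * √π) * ENNReal.ofReal ε * volume {x | t < V x} := by
        rw [lintegral_const_mul _ (measurable_measure_superlevel volume V), ← mul_assoc,
          mul_comm (ENNReal.ofReal ε)]
    _ ≤ ∫⁻ t, m t * volume (Metric.thickening ε {x | t < V x} \ {x | t < V x}) :=
        (setLIntegral_mono' measurableSet_Ioi hshell).trans (setLIntegral_le_lintegral _ _)
    _ ≤ ∫⁻ x, m (V x) * ENNReal.ofReal (ε * r x) :=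
        lintegral_mul_measure_thickening_superlevel_sdiff_le volume hV hmanti hr
    _ = ENNReal.ofReal ε * ∫⁻ x, m (V x) * ENNReal.ofReal (r x) := by
        rw [← lintegral_const_mul' _ _ ENNReal.ofReal_ne_top]
        exact lintegral_congr fun x ↦ by rw [ENNReal.ofReal_mul hε.le, mul_left_comm]

theorem lintegral_le_lintegral_sqrt_volume_superlevel_mul_enorm_fderiv_add (hV : ContDiff ℝ 1 V)
    (hVs : HasCompactSupport V) (hV0 : 0 ≤ V) {κ : ℝ} (hκ : 0 < κ) :
    ENNReal.ofReal (2 * √π) * ∫⁻ x, ENNReal.ofReal (V x) ≤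
      (∫⁻ x, volume {y | V x < V y} ^ (1 / 2 : ℝ) * ‖fderiv ℝ V x‖ₑ) + ENNReal.ofReal κ *
        (volume {y | 0 < V y} ^ (1 / 2 : ℝ) * volume (Metric.thickening 1 (tsupport V))) := by
  set N := Metric.thickening 1 (tsupport V)
  have hN : MeasurableSet N := Metric.isOpen_thickening.measurableSet
  set m₀ := volume {y | 0 < V y} ^ (1 / 2 : ℝ)
  have hm₀ : m₀ ≠ ∞ :=
    ENNReal.rpow_ne_top_of_nonneg (by norm_num) (isBounded_superlevel hVs le_rfl).measure_lt_top.ne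
  have hm (x) : volume {y | V x < V y} ^ (1 / 2 : ℝ) ≤ m₀ :=
    ENNReal.rpow_le_rpow (antitone_measure_superlevel volume V (hV0 x)) (by norm_num)
  have hind (x) : ENNReal.ofReal (N.indicator (fun _ ↦ κ) x) =
      N.indicator (fun _ ↦ ENNReal.ofReal κ) x := by
    by_cases hx : x ∈ N <;> simp [hx]
  have hpoint (x) : volume {y | V x < V y} ^ (1 / 2 : ℝ) *
      ENNReal.ofReal (‖fderiv ℝ V x‖ + N.indicator (fun _ ↦ κ) x) ≤
      volume {y | V x < V y} ^ (1 / 2 : ℝ) * ‖fderiv ℝ V x‖ₑ +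
        m₀ * N.indicator (fun _ ↦ ENNReal.ofReal κ) x := by
    rw [ENNReal.ofReal_add (norm_nonneg _) (Set.indicator_nonneg (fun _ _ ↦ hκ.le) x),
      ofReal_norm, hind, mul_add]
    gcongr
    exact hm x
  obtain ⟨ε, hε, hincr⟩ := exists_pos_forall_dist_lt_le_add_indicator hV hVs hκ
  rw [lintegral_eq_lintegral_meas_lt _ (.of_forall hV0) hV.continuous.measurable.aemeasurable]
  refine (lintegral_volume_superlevel_le_of_le_add hV.continuous hVs hε hincr).trans
    ((lintegral_mono hpoint).trans_eq ?_)
  rw [lintegral_add_right _ ((measurable_const.indicator hN).const_mul m₀),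
    lintegral_const_mul' _ _ hm₀, lintegral_indicator_const hN, mul_left_comm]

theorem lintegral_le_lintegral_sqrt_volume_superlevel_mul_enorm_fderiv (hV : ContDiff ℝ 1 V)
    (hVs : HasCompactSupport V) (hV0 : 0 ≤ V) :
    ENNReal.ofReal (2 * √π) * ∫⁻ x, ENNReal.ofReal (V x) ≤
      ∫⁻ x, volume {y | V x < V y} ^ (1 / 2 : ℝ) * ‖fderiv ℝ V x‖ₑ := by
  have hm₀ : volume {y | 0 < V y} ^ (1 / 2 : ℝ) ≠ ∞ :=
    ENNReal.rpow_ne_top_of_nonneg (by norm_num) (isBounded_superlevel hVs le_rfl).measure_lt_top.ne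
  have hN : volume (Metric.thickening 1 (tsupport V)) ≠ ∞ :=
    hVs.isCompact.isBounded.thickening.measure_lt_top.ne
  have hκ : Filter.Tendsto ENNReal.ofReal (𝓝[>] 0) (𝓝 0) := by
    simpa using (ENNReal.continuous_ofReal.tendsto 0).mono_left nhdsWithin_le_nhds
  exact ge_of_tendsto
    ((ENNReal.Tendsto.mul_const hκ (.inr (ENNReal.mul_ne_top hm₀ hN))).const_add _)
    (eventually_nhdsWithin_of_forall fun κ hκ ↦
      lintegral_le_lintegral_sqrt_volume_superlevel_mul_enorm_fderiv_add hV hVs hV0 hκ)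
    |>.trans_eq (by simp)

end Isoperimetry

/-! ### Divergence theorem on superlevel sets -/

section Truncation

variable {X : Type*} [TopologicalSpace X] {v : X → ℝ} {δ : ℝ}

theorem continuous_comp_mul_of_continuousOn_superlevel (hv : Continuous v) (hδ : 0 < δ)
    {g : ℝ → ℝ} (hg : Continuous g) (hgδ : ∀ t ≤ δ, g t = 0) {k : X → ℝ}
    (hk : ContinuousOn k {x | 0 < v x}) : Continuous fun x ↦ g (v x) * k x := by
  refine continuous_iff_continuousAt.mpr fun x ↦ ?_
  obtain hx | hx := lt_or_ge (v x) δ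
  · refine (continuousAt_const (y := (0 : ℝ))).congr ?_
    filter_upwards [(isOpen_lt hv continuous_const).mem_nhds hx] with y hy
    simp [hgδ _ hy.le]
  · have hpos : {x | 0 < v x} ∈ 𝓝 x :=
      (isOpen_lt continuous_const hv).mem_nhds (hδ.trans_le hx)
    exact (hg.comp hv).continuousAt.mul (hk.continuousAt hpos)

theorem contDiff_comp_of_contDiffOn_superlevel {E : Type*} [NormedAddCommGroup E]
    [NormedSpace ℝ E] {v : E → ℝ} (hv : Continuous v) {n : WithTop ℕ∞}
    (hvn : ContDiffOn ℝ n v {x | 0 < v x}) (hδ : 0 < δ) {φ : ℝ → ℝ} (hφ : ContDiff ℝ n φ)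
    (hφδ : ∀ t ≤ δ, φ t = 0) : ContDiff ℝ n (φ ∘ v) := by
  refine contDiff_iff_contDiffAt.mpr fun x ↦ ?_
  obtain hx | hx := lt_or_ge (v x) δ
  · refine (contDiffAt_const (c := (0 : ℝ))).congr_of_eventuallyEq ?_
    filter_upwards [(isOpen_lt hv continuous_const).mem_nhds hx] with y hy using hφδ _ hy.le
  · have hpos : {x | 0 < v x} ∈ 𝓝 x :=
      (isOpen_lt continuous_const hv).mem_nhds (hδ.trans_le hx)
    exact hφ.contDiffAt.comp x (hvn.contDiffAt hpos)

theorem intervalIntegral_eq_zero_of_le (hδ : 0 ≤ δ) {g : ℝ → ℝ} (hgδ : ∀ t ≤ δ, g t = 0)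
    {t : ℝ} (ht : t ≤ δ) : ∫ s in (0 : ℝ)..t, g s = 0 :=
  intervalIntegral.integral_zero_ae <| .of_forall fun _ hs ↦ hgδ _ (hs.2.trans (max_le hδ ht))

theorem intervalIntegral_nonneg_of_forall_le_eq_zero (hδ : 0 ≤ δ) {g : ℝ → ℝ}
    (hgδ : ∀ t ≤ δ, g t = 0) (hg0 : 0 ≤ g) (t : ℝ) : 0 ≤ ∫ s in (0 : ℝ)..t, g s := by
  obtain ht | ht := le_total t δ
  · exact (intervalIntegral_eq_zero_of_le hδ hgδ ht).ge
  · exact intervalIntegral.integral_nonneg (hδ.trans ht) fun s _ ↦ hg0 s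

theorem contDiff_succ_intervalIntegral {n : ℕ} {g : ℝ → ℝ} (hg : ContDiff ℝ n g) (a : ℝ) :
    ContDiff ℝ (n + 1) fun t ↦ ∫ s in a..t, g s := by
  have hderiv : deriv (fun t ↦ ∫ s in a..t, g s) = g :=
    funext (hg.continuous.deriv_integral g a)
  have hdiff : Differentiable ℝ fun t ↦ ∫ s in a..t, g s := fun t ↦
    (hg.continuous.integral_hasStrictDerivAt a t).hasDerivAt.differentiableAt
  exact contDiff_succ_iff_deriv.mpr ⟨hdiff, by simp, hderiv.symm ▸ hg⟩

end Truncation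

theorem lintegral_map_withDensity {α β : Type*} [MeasurableSpace α] [MeasurableSpace β]
    (μ : Measure α) {ρ : α → ℝ≥0∞} (hρ : Measurable ρ) {v : α → β} (hv : Measurable v)
    {q : β → ℝ≥0∞} (hq : Measurable q) :
    ∫⁻ t, q t ∂(μ.withDensity ρ).map v = ∫⁻ x, ρ x * q (v x) ∂μ := by
  rw [lintegral_map hq hv]
  exact lintegral_withDensity_eq_lintegral_mul _ hρ (hq.comp hv)

section Fderiv

variable {E : Type*} [NormedAddCommGroup E] [NormedSpace ℝ E] [MeasurableSpace E] [BorelSpace E]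

theorem measurable_comp_mul_enorm_fderiv_sq {v : E → ℝ} (hv : Measurable v) {g : ℝ → ℝ}
    (hg : Measurable g) : Measurable fun x ↦ ENNReal.ofReal (g (v x)) * ‖fderiv ℝ v x‖ₑ ^ 2 :=
  (hg.comp hv).ennreal_ofReal.mul ((measurable_fderiv ℝ v).enorm.pow_const 2)

theorem integrable_fderiv_apply (μ : Measure E) [IsFiniteMeasureOnCompacts μ] {f : E → ℝ}
    (hf : ContDiff ℝ 1 f) (hfs : HasCompactSupport f) (w : E) :
    Integrable (fun x ↦ fderiv ℝ f x w) μ :=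
  ((hf.continuous_fderiv one_ne_zero).clm_apply continuous_const).integrable_of_hasCompactSupport
    (hfs.fderiv_apply ℝ w)

theorem integral_fderiv_apply_eq_zero [FiniteDimensional ℝ E] (μ : Measure E)
    [μ.IsAddHaarMeasure] {f : E → ℝ} (hf : ContDiff ℝ 1 f) (hfs : HasCompactSupport f) (w : E) :
    ∫ x, fderiv ℝ f x w ∂μ = 0 := by
  simpa using integral_mul_fderiv_eq_neg_fderiv_mul_of_integrable (μ := μ)
    (f := fun _ ↦ (1 : ℝ)) (g := f) (v := w) (by simp)
    (by simpa using integrable_fderiv_apply μ hf hfs w)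
    (by simpa using hf.continuous.integrable_of_hasCompactSupport hfs) (by simp)
    fun x _ ↦ hf.differentiable one_ne_zero x

end Fderiv

section Laplacian

variable {E : Type*} [NormedAddCommGroup E] [InnerProductSpace ℝ E] [FiniteDimensional ℝ E]
  {F : Type*} [NormedAddCommGroup F] [NormedSpace ℝ F]

theorem laplacian_eq_sum_fderiv_fderiv {ι : Type*} [Fintype ι] (b : OrthonormalBasis ι ℝ E)
    (f : E → F) (x : E) : Δ f x = ∑ i, fderiv ℝ (fderiv ℝ f) x (b i) (b i) := by
  simp [InnerProductSpace.laplacian_eq_iteratedFDeriv_orthonormalBasis f b,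
    iteratedFDeriv_two_apply]

theorem continuousOn_laplacian {f : E → F} {s : Set E} (hs : IsOpen s)
    (hf : ContDiffOn ℝ 2 f s) : ContinuousOn (Δ f) s := by
  have hf' : ContinuousOn (fderiv ℝ (fderiv ℝ f)) s :=
    (hf.fderiv_of_isOpen hs (m := 1) (by norm_num)).continuousOn_fderiv_of_isOpen hs le_rfl
  refine ContinuousOn.congr (f := fun x ↦ ∑ i, fderiv ℝ (fderiv ℝ f) x
    (stdOrthonormalBasis ℝ E i) (stdOrthonormalBasis ℝ E i)) (by fun_prop) fun x _ ↦ ?_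
  exact laplacian_eq_sum_fderiv_fderiv _ f x

theorem laplacian_comp_eq {φ : ℝ → ℝ} {f : E → ℝ} {x : E} (hφ : ContDiffAt ℝ 2 φ (f x))
    (hf : ContDiffAt ℝ 2 f x) :
    Δ (φ ∘ f) x = deriv (deriv φ) (f x) * ‖fderiv ℝ f x‖ ^ 2 + deriv φ (f x) * Δ f x := by
  let b := stdOrthonormalBasis ℝ E
  have hfirst : fderiv ℝ (φ ∘ f) =ᶠ[𝓝 x] fun y ↦ deriv φ (f y) • fderiv ℝ f y := by
    filter_upwards [hf.eventually (by simp),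
      hf.continuousAt.eventually (hφ.eventually (by simp))] with y hfy hφy
    exact ((hφy.differentiableAt two_ne_zero).hasDerivAt.comp_hasFDerivAt y
      (hfy.differentiableAt two_ne_zero).hasFDerivAt).fderiv
  have hφ' : HasDerivAt (deriv φ) (deriv (deriv φ) (f x)) (f x) :=
    ((hφ.derivWithin (m := 1) (by norm_num)).differentiableAt one_ne_zero).hasDerivAt
  have hf' : HasFDerivAt (fderiv ℝ f) (fderiv ℝ (fderiv ℝ f) x) x :=
    ((hf.fderiv_right (m := 1) (by norm_num)).differentiableAt one_ne_zero).hasFDerivAt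
  have hsecond := (hφ'.comp_hasFDerivAt x (hf.differentiableAt two_ne_zero).hasFDerivAt).smul hf'
  have hfun : fderiv ℝ (fderiv ℝ (φ ∘ f)) x = _ := hfirst.fderiv_eq.trans hsecond.fderiv
  simp [laplacian_eq_sum_fderiv_fderiv b, hfun, OrthonormalBasis.norm_dual b, Finset.mul_sum,
    Finset.sum_add_distrib, sq, add_comm, mul_assoc]

variable [MeasurableSpace E] [BorelSpace E]

theorem integral_laplacian_eq_zero {f : E → ℝ} (hf : ContDiff ℝ 2 f) (hfs : HasCompactSupport f) :
    ∫ x, Δ f x = 0 := by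
  let b := stdOrthonormalBasis ℝ E
  have hf' : ContDiff ℝ 1 (fderiv ℝ f) := hf.fderiv_right (by norm_num)
  have hpartial (i) : ContDiff ℝ 1 fun x ↦ fderiv ℝ f x (b i) := hf'.clm_apply contDiff_const
  have hpartials (i) : HasCompactSupport fun x ↦ fderiv ℝ f x (b i) := hfs.fderiv_apply ℝ _
  have hsum (x : E) : Δ f x = ∑ i, fderiv ℝ (fun y ↦ fderiv ℝ f y (b i)) x (b i) := by
    simp [laplacian_eq_sum_fderiv_fderiv b,
      fderiv_clm_apply (hf'.differentiable one_ne_zero x) (differentiableAt_const _)]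
  simp only [hsum]
  rw [integral_finsetSum _ fun i _ ↦ integrable_fderiv_apply _ (hpartial i) (hpartials i) _]
  simp [integral_fderiv_apply_eq_zero _ (hpartial _) (hpartials _)]

/-- The Riesz measure `-Δ v dx` of `v` on the open set `{v > 0}`, where `v` is meant to be
superharmonic: `ENNReal.ofReal` discards the part where `Δ v > 0`. -/
noncomputable def rieszMeasure (v : E → ℝ) : Measure E :=
  (volume.restrict {x | 0 < v x}).withDensity fun x ↦ ENNReal.ofReal (-Δ v x)

instance (v : E → ℝ) : SFinite (rieszMeasure v) := by
  unfold rieszMeasure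
  infer_instance

section SuperlevelSets

variable {v : E → ℝ} (hv : Continuous v) (hvs : HasCompactSupport v)

include hv

theorem ae_rieszMeasure_pos : ∀ᵐ x ∂rieszMeasure v, 0 < v x :=
  withDensity_absolutelyContinuous _ _ |>.ae_le
    (ae_restrict_mem (isOpen_lt continuous_const hv).measurableSet)

theorem lintegral_rieszMeasure (hv2 : ContDiffOn ℝ 2 v {x | 0 < v x})
    (f : E → ℝ≥0∞) :
    ∫⁻ x, f x ∂rieszMeasure v = ∫⁻ x in {x | 0 < v x}, ENNReal.ofReal (-Δ v x) * f x := by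
  have hpos : IsOpen {x | 0 < v x} := isOpen_lt continuous_const hv
  exact lintegral_withDensity_eq_lintegral_mul_non_measurable₀ _
    ((continuousOn_laplacian hpos hv2).neg.aemeasurable hpos.measurableSet).ennreal_ofReal
    (.of_forall fun _ ↦ ENNReal.ofReal_lt_top) f

theorem lintegral_ofReal_comp_mul_le (hv2 : ContDiffOn ℝ 2 v {x | 0 < v x}) {η : ℝ → ℝ}
    (hη0 : ∀ t ≤ 0, η t = 0) (hηΔ : ∀ x, 0 < v x → η (v x) ≤ -Δ v x) (f : E → ℝ≥0∞) :
    ∫⁻ x, ENNReal.ofReal (η (v x)) * f x ≤ ∫⁻ x, f x ∂rieszMeasure v := by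
  rw [lintegral_rieszMeasure hv hv2, ← setLIntegral_eq_of_support_subset (s := {x | 0 < v x})]
  · refine setLIntegral_mono' (isOpen_lt continuous_const hv).measurableSet fun x hx ↦ ?_
    gcongr
    exact hηΔ x hx
  · refine Function.support_subset_iff'.mpr fun x hx ↦ ?_
    simp [hη0 _ (not_lt.mp hx)]

section Truncated

variable {δ : ℝ} (hδ : 0 < δ) {g : ℝ → ℝ} (hg : Continuous g) (hgδ : ∀ t ≤ δ, g t = 0)
include hvs hδ hg hgδ

theorem integrable_comp_mul_of_continuousOn_superlevel {k : E → ℝ}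
    (hk : ContinuousOn k {x | 0 < v x}) : Integrable fun x ↦ g (v x) * k x := by
  refine (continuous_comp_mul_of_continuousOn_superlevel hv hδ hg hgδ hk)
    |>.integrable_of_hasCompactSupport ?_
  exact (hvs.comp_left (hgδ 0 hδ.le)).mul_right

variable (hv2 : ContDiffOn ℝ 2 v {x | 0 < v x})
include hv2

theorem integrable_comp_mul_norm_fderiv_sq : Integrable fun x ↦ g (v x) * ‖fderiv ℝ v x‖ ^ 2 :=
  integrable_comp_mul_of_continuousOn_superlevel hv hvs hδ hg hgδ
    ((hv2.continuousOn_fderiv_of_isOpen (isOpen_lt continuous_const hv) one_le_two).norm.pow 2)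

theorem integrable_intervalIntegral_mul_neg_laplacian :
    Integrable fun x ↦ (∫ s in (0 : ℝ)..v x, g s) * -Δ v x :=
  integrable_comp_mul_of_continuousOn_superlevel hv hvs hδ
    (intervalIntegral.continuous_primitive (fun _ _ ↦ hg.intervalIntegrable _ _) 0)
    (fun _ ↦ intervalIntegral_eq_zero_of_le hδ.le hgδ)
    (continuousOn_laplacian (isOpen_lt continuous_const hv) hv2).neg

-- The divergence theorem for `φ ∘ v` with `φ'' = g`, where `φ` vanishes near the level `0`, so that
-- no regularity of `v` at the boundary of `{v > 0}` enters.
theorem integral_comp_mul_norm_fderiv_sq_eq :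
    ∫ x, g (v x) * ‖fderiv ℝ v x‖ ^ 2 = ∫ x, (∫ s in (0 : ℝ)..v x, g s) * -Δ v x := by
  let G (t : ℝ) : ℝ := ∫ s in (0 : ℝ)..t, g s
  let φ (t : ℝ) : ℝ := ∫ s in (0 : ℝ)..t, G s
  have hGδ : ∀ t ≤ δ, G t = 0 := fun _ ↦ intervalIntegral_eq_zero_of_le hδ.le hgδ
  have hφδ : ∀ t ≤ δ, φ t = 0 := fun _ ↦ intervalIntegral_eq_zero_of_le hδ.le hGδ
  have hG : ContDiff ℝ 1 G := mod_cast
    contDiff_succ_intervalIntegral (n := 0) (contDiff_zero.mpr hg) 0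
  have hφ : ContDiff ℝ 2 φ := mod_cast contDiff_succ_intervalIntegral (n := 1) hG 0
  have hdφ : deriv φ = G := funext (hG.continuous.deriv_integral G 0)
  have hdG : deriv G = g := funext (hg.deriv_integral g 0)
  have hW : ContDiff ℝ 2 (φ ∘ v) := contDiff_comp_of_contDiffOn_superlevel hv hv2 hδ hφ hφδ
  have hlap (x : E) : Δ (φ ∘ v) x = g (v x) * ‖fderiv ℝ v x‖ ^ 2 - G (v x) * -Δ v x := by
    obtain hx | hx := lt_or_ge (v x) δ
    · have hzero : φ ∘ v =ᶠ[𝓝 x] fun _ ↦ 0 := by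
        filter_upwards [(isOpen_lt hv continuous_const).mem_nhds hx] with y hy using hφδ _ hy.le
      simp [(InnerProductSpace.laplacian_congr_nhds hzero).eq_of_nhds, hgδ _ hx.le, hGδ _ hx.le]
    · have hpos : {x | 0 < v x} ∈ 𝓝 x :=
        (isOpen_lt continuous_const hv).mem_nhds (hδ.trans_le hx)
      simp [laplacian_comp_eq hφ.contDiffAt (hv2.contDiffAt hpos), hdφ, hdG]
  have hdiv := integral_laplacian_eq_zero hW (hvs.comp_left (hφδ 0 hδ.le))
  simp only [hlap] at hdiv
  rwa [integral_sub (integrable_comp_mul_norm_fderiv_sq hv hvs hδ hg hgδ hv2)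
    (integrable_intervalIntegral_mul_neg_laplacian hv hvs hδ hg hgδ hv2), sub_eq_zero] at hdiv

variable (hg0 : 0 ≤ g)
include hg0

theorem lintegral_comp_mul_enorm_fderiv_sq_ne_top :
    ∫⁻ x, ENNReal.ofReal (g (v x)) * ‖fderiv ℝ v x‖ₑ ^ 2 ≠ ∞ := by
  convert (integrable_comp_mul_norm_fderiv_sq hv hvs hδ hg hgδ hv2).lintegral_lt_top.ne using 3
  rw [ENNReal.ofReal_mul (hg0 _), ENNReal.ofReal_pow (norm_nonneg _), ofReal_norm]

theorem lintegral_comp_mul_enorm_fderiv_sq_eq (hΔ : ∀ x, 0 < v x → Δ v x ≤ 0) :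
    ∫⁻ x, ENNReal.ofReal (g (v x)) * ‖fderiv ℝ v x‖ₑ ^ 2 =
      ∫⁻ t in Set.Ioi 0, rieszMeasure v {x | t < v x} * ENNReal.ofReal (g t) := by
  let G (t : ℝ) : ℝ := ∫ s in (0 : ℝ)..t, g s
  have hG0 : 0 ≤ G := intervalIntegral_nonneg_of_forall_le_eq_zero hδ.le hgδ hg0
  have hGv (x : E) (hx : v x ≤ 0) : G (v x) = 0 :=
    intervalIntegral_eq_zero_of_le hδ.le hgδ (hx.trans hδ.le)
  have hmul0 (x : E) : 0 ≤ G (v x) * -Δ v x := by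
    obtain hx | hx := le_or_gt (v x) 0
    · simp [hGv x hx]
    · exact mul_nonneg (hG0 _) (neg_nonneg.mpr (hΔ x hx))
  calc
    _ = ∫⁻ x, ENNReal.ofReal (g (v x) * ‖fderiv ℝ v x‖ ^ 2) := by
      simp_rw [ENNReal.ofReal_mul (hg0 _), ENNReal.ofReal_pow (norm_nonneg _), ofReal_norm]
    _ = ENNReal.ofReal (∫ x, g (v x) * ‖fderiv ℝ v x‖ ^ 2) :=
      (ofReal_integral_eq_lintegral_ofReal
        (integrable_comp_mul_norm_fderiv_sq hv hvs hδ hg hgδ hv2)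
        (.of_forall fun x ↦ mul_nonneg (hg0 _) (sq_nonneg _))).symm
    _ = ENNReal.ofReal (∫ x, G (v x) * -Δ v x) := by
      rw [integral_comp_mul_norm_fderiv_sq_eq hv hvs hδ hg hgδ hv2]
    _ = ∫⁻ x, ENNReal.ofReal (G (v x) * -Δ v x) := ofReal_integral_eq_lintegral_ofReal
        (integrable_intervalIntegral_mul_neg_laplacian hv hvs hδ hg hgδ hv2) (.of_forall hmul0)
    _ = ∫⁻ x in {x | 0 < v x}, ENNReal.ofReal (-Δ v x) * ENNReal.ofReal (G (v x)) := by
      rw [← setLIntegral_eq_of_support_subset (s := {x | 0 < v x})]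
      · simp_rw [ENNReal.ofReal_mul (hG0 _), mul_comm]
      · refine Function.support_subset_iff'.mpr fun x hx ↦ ?_
        simp [hGv x (not_lt.mp hx)]
    _ = ∫⁻ x, ENNReal.ofReal (G (v x)) ∂rieszMeasure v := (lintegral_rieszMeasure hv hv2 _).symm
    _ = _ := lintegral_comp_eq_lintegral_meas_lt_mul _
      ((ae_rieszMeasure_pos hv).mono fun _ ↦ le_of_lt) hv.measurable.aemeasurable
      (fun _ _ ↦ hg.intervalIntegrable _ _) (.of_forall hg0)

theorem map_withDensity_comp_mul_enorm_fderiv_sq (hΔ : ∀ x, 0 < v x → Δ v x ≤ 0) :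
    (volume.withDensity fun x ↦ ENNReal.ofReal (g (v x)) * ‖fderiv ℝ v x‖ₑ ^ 2).map v =
      (volume.restrict (Set.Ioi 0)).withDensity
        fun t ↦ rieszMeasure v {x | t < v x} * ENNReal.ofReal (g t) := by
  have hmeas : Measurable fun t ↦ rieszMeasure v {x | t < v x} * ENNReal.ofReal (g t) :=
    (measurable_measure_superlevel _ v).fun_mul hg.measurable.ennreal_ofReal
  have := isFiniteMeasure_withDensity
    (lintegral_comp_mul_enorm_fderiv_sq_ne_top hv hvs hδ hg hgδ hv2 hg0)
  refine ext_of_forall_lintegral_eq_of_IsFiniteMeasure fun f ↦ ?_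
  have hf : Measurable fun t ↦ (f t : ℝ≥0∞) := f.continuous.measurable.coe_nnreal_ennreal
  have hfg := lintegral_comp_mul_enorm_fderiv_sq_eq hv hvs hδ (g := fun t ↦ g t * f t)
    (by fun_prop) (fun t ht ↦ by simp [hgδ t ht]) hv2 (fun t ↦ mul_nonneg (hg0 t) (f t).2) hΔ
  rw [lintegral_map_withDensity _ (measurable_comp_mul_enorm_fderiv_sq hv.measurable hg.measurable)
    hv.measurable hf, lintegral_withDensity_eq_lintegral_mul _ hmeas hf]
  simpa [ENNReal.ofReal_mul (hg0 _), mul_comm, mul_assoc, mul_left_comm] using hfg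

theorem lintegral_comp_mul_enorm_fderiv_sq_mul_comp (hΔ : ∀ x, 0 < v x → Δ v x ≤ 0)
    {q : ℝ → ℝ≥0∞} (hq : Measurable q) :
    ∫⁻ x, ENNReal.ofReal (g (v x)) * ‖fderiv ℝ v x‖ₑ ^ 2 * q (v x) =
      ∫⁻ t in Set.Ioi 0, rieszMeasure v {x | t < v x} * ENNReal.ofReal (g t) * q t := by
  rw [← lintegral_map_withDensity _ (measurable_comp_mul_enorm_fderiv_sq hv.measurable
    hg.measurable) hv.measurable hq,
    map_withDensity_comp_mul_enorm_fderiv_sq hv hvs hδ hg hgδ hv2 hg0 hΔ,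
    lintegral_withDensity_eq_lintegral_mul _ ((measurable_measure_superlevel _ v).fun_mul
      hg.measurable.ennreal_ofReal) hq]
  rfl

end Truncated
end SuperlevelSets
end Laplacian

/-! ### Talenti's comparison -/

theorem two_mul_le_sq_div_add (a c : ℝ≥0∞) : 2 * a ≤ a ^ 2 / c + c := by
  obtain rfl | hc0 := eq_or_ne c 0
  · obtain rfl | ha0 := eq_or_ne a 0
    · simp
    · simp [ENNReal.div_zero, ha0]
  obtain rfl | hc := eq_or_ne c ∞
  · simp
  obtain rfl | ha := eq_or_ne a ∞
  · simp [ENNReal.top_div_of_ne_top hc]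
  have hsq : 2 * a * c ≤ a ^ 2 + c ^ 2 := by
    lift a to ℝ≥0 using ha
    lift c to ℝ≥0 using hc
    exact_mod_cast two_mul_le_add_sq a c
  calc
    2 * a = 2 * a * c / c := (ENNReal.mul_div_cancel_right hc0 hc).symm
    _ ≤ (a ^ 2 + c ^ 2) / c := by gcongr
    _ = a ^ 2 / c + c := by rw [ENNReal.add_div, sq c, ENNReal.mul_div_cancel_right hc0 hc]

theorem two_mul_lintegral_mul_sqrt_mul_le {α : Type*} [MeasurableSpace α] (μ : Measure α)
    {w Φ : α → ℝ≥0∞} (hw : Measurable w) (hΦ : Measurable Φ) (m D : α → ℝ≥0∞) {c : ℝ≥0∞}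
    (hc : c ≠ ∞) :
    2 * (c * ∫⁻ x, w x * (m x ^ (1 / 2 : ℝ) * D x) ∂μ) ≤
      c ^ 2 * (∫⁻ x, w x * D x ^ 2 * (m x / Φ x) ∂μ) + ∫⁻ x, w x * Φ x ∂μ := by
  have hsq (x) : (m x ^ (1 / 2 : ℝ)) ^ 2 = m x := by
    rw [← ENNReal.rpow_natCast, ← ENNReal.rpow_mul]
    norm_num
  have hyoung (x) : 2 * (c * (m x ^ (1 / 2 : ℝ) * D x)) ≤
      c ^ 2 * (D x ^ 2 * (m x / Φ x)) + Φ x := by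
    refine (two_mul_le_sq_div_add _ (Φ x)).trans_eq ?_
    rw [mul_pow, mul_pow, hsq, div_eq_mul_inv, div_eq_mul_inv]
    ring
  calc
    _ = ∫⁻ x, w x * (2 * (c * (m x ^ (1 / 2 : ℝ) * D x))) ∂μ := by
      rw [← lintegral_const_mul' c _ hc, ← lintegral_const_mul' 2 _ ENNReal.ofNat_ne_top]
      exact lintegral_congr fun x ↦ by ring
    _ ≤ ∫⁻ x, (c ^ 2 * (w x * D x ^ 2 * (m x / Φ x)) + w x * Φ x) ∂μ := by
      refine lintegral_mono fun x ↦ (mul_le_mul_right (hyoung x) (w x)).trans_eq ?_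
      ring
    _ = _ := by
      rw [lintegral_add_right _ (hw.fun_mul hΦ), lintegral_const_mul' _ _ (ENNReal.pow_ne_top hc)]

theorem two_mul_lintegral_measure_superlevel_le {α : Type*} [MeasurableSpace α] (ν : Measure α)
    [SFinite ν] {v : α → ℝ} (hv : Measurable v) :
    2 * ∫⁻ x, ν {y | v x < v y} ∂ν ≤ ν Set.univ ^ 2 := by
  let S : Set (α × α) := {p | v p.1 < v p.2}
  have hS : MeasurableSet S :=
    measurableSet_lt (hv.comp measurable_fst) (hv.comp measurable_snd)
  have hswap : ν.prod ν (Prod.swap ⁻¹' S) = ν.prod ν S :=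
    Measure.measurePreserving_swap.measure_preimage hS.nullMeasurableSet
  have hdisj : Disjoint S (Prod.swap ⁻¹' S) :=
    Set.disjoint_left.mpr fun p (hp : v p.1 < v p.2) (hp' : v p.2 < v p.1) ↦ lt_asymm hp hp'
  calc
    2 * ∫⁻ x, ν {y | v x < v y} ∂ν = ν.prod ν S + ν.prod ν (Prod.swap ⁻¹' S) := by
      rw [hswap, ← two_mul, Measure.prod_apply hS]
      rfl
    _ = ν.prod ν (S ∪ Prod.swap ⁻¹' S) := (measure_union hdisj (measurable_swap hS)).symm
    _ ≤ ν.prod ν Set.univ := measure_mono (Set.subset_univ _)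
    _ = ν Set.univ ^ 2 := by rw [← Set.univ_prod_univ, Measure.prod_prod, sq]

theorem lintegral_measure_superlevel_mul_ne_top {X : Type*} [TopologicalSpace X]
    [MeasurableSpace X] [OpensMeasurableSpace X] (μ : Measure X) [IsFiniteMeasureOnCompacts μ]
    {v : X → ℝ} (hv : Continuous v) (hvs : HasCompactSupport v) (hv0 : 0 ≤ v) {η : ℝ → ℝ}
    (hη : Continuous η) (hη0 : 0 ≤ η) :
    ∫⁻ t in Set.Ioi 0, μ {x | t < v x} * ENNReal.ofReal (η t) ≠ ∞ := by
  have hG : Continuous fun t ↦ ∫ s in (0 : ℝ)..t, η s :=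
    intervalIntegral.continuous_primitive (fun _ _ ↦ hη.intervalIntegrable _ _) 0
  rw [← lintegral_comp_eq_lintegral_meas_lt_mul μ (.of_forall hv0) hv.measurable.aemeasurable
    (fun _ _ ↦ hη.intervalIntegrable _ _) (.of_forall hη0)]
  exact ((hG.comp hv).integrable_of_hasCompactSupport
    (hvs.comp_left intervalIntegral.integral_same)).lintegral_lt_top.ne

theorem enorm_fderiv_comp_eq {E : Type*} [NormedAddCommGroup E] [NormedSpace ℝ E]
    {v : E → ℝ} (hv : Continuous v) (hv1 : ContDiffOn ℝ 1 v {x | 0 < v x}) {δ : ℝ} (hδ : 0 < δ)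
    {G : ℝ → ℝ} (hG : Differentiable ℝ G) (hGδ : ∀ t ≤ δ, G t = 0) (hG0 : ∀ t, 0 ≤ deriv G t)
    (x : E) : ‖fderiv ℝ (G ∘ v) x‖ₑ = ENNReal.ofReal (deriv G (v x)) * ‖fderiv ℝ v x‖ₑ := by
  obtain hx | hx := lt_or_ge (v x) δ
  · have hGzero : G =ᶠ[𝓝 (v x)] fun _ ↦ 0 := by
      filter_upwards [Iic_mem_nhds hx] with t ht using hGδ t ht
    have hzero : G ∘ v =ᶠ[𝓝 x] fun _ ↦ 0 := hv.continuousAt.eventually hGzero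
    rw [hzero.fderiv_eq, hGzero.deriv_eq, fderiv_const_apply, deriv_const, ENNReal.ofReal_zero,
      zero_mul]
    exact enorm_zero (E := E →L[ℝ] ℝ)
  · have hpos : {x | 0 < v x} ∈ 𝓝 x :=
      (isOpen_lt continuous_const hv).mem_nhds (hδ.trans_le hx)
    have hvx := (hv1.contDiffAt hpos).differentiableAt one_ne_zero
    rw [((hG (v x)).hasDerivAt.comp_hasFDerivAt x hvx.hasFDerivAt).fderiv, enorm_smul,
      Real.enorm_of_nonneg (hG0 _)]

theorem exists_continuous_le_eq_of_two_mul_le {f : ℝ → ℝ} (hf : ContinuousOn f (Set.Ioi 0))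
    (hf0 : ∀ t, 0 < t → 0 ≤ f t) {δ : ℝ} (hδ : 0 < δ) :
    ∃ η : ℝ → ℝ, Continuous η ∧ 0 ≤ η ∧ (∀ t ≤ δ, η t = 0) ∧ (∀ t, 0 < t → η t ≤ f t) ∧
      ∀ t, 2 * δ ≤ t → η t = f t := by
  let χ (t : ℝ) : ℝ := min 1 (max 0 (t / δ - 1))
  have hχδ (t) (ht : t ≤ δ) : χ t = 0 := by
    have : t / δ ≤ 1 := (div_le_one hδ).mpr ht
    simp [χ, this]
  have hpos (t) : 0 < max t δ := lt_max_of_lt_right hδ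
  refine ⟨fun t ↦ f (max t δ) * χ t, ?_, fun t ↦ ?_, fun t ht ↦ ?_, fun t ht ↦ ?_, fun t ht ↦ ?_⟩
  · exact (hf.comp_continuous (by fun_prop) hpos).mul (by fun_prop)
  · exact mul_nonneg (hf0 _ (hpos t)) (le_min zero_le_one (le_max_left _ _))
  · simp [hχδ t ht]
  · obtain htδ | htδ := le_total t δ
    · simpa [hχδ t htδ] using hf0 t ht
    · simpa [max_eq_left htδ] using mul_le_of_le_one_right (hf0 t ht) (min_le_left _ _)
  · have hχ : 2 ≤ t / δ := (le_div_iff₀ hδ).mpr ht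
    have : χ t = 1 := min_eq_left (le_max_of_le_right (by linarith))
    simp [this, max_eq_left (show δ ≤ t by linarith)]

theorem setLIntegral_Ioi_le_of_forall_Ioi {α : Type*} [TopologicalSpace α] [LinearOrder α]
    [OrderTopology α] [DenselyOrdered α] [NoMaxOrder α] [FirstCountableTopology α]
    [MeasurableSpace α] {μ : Measure α} {F : α → ℝ≥0∞} {a : α} {C : ℝ≥0∞}
    (h : ∀ b, a < b → ∫⁻ t in Set.Ioi b, F t ∂μ ≤ C) : ∫⁻ t in Set.Ioi a, F t ∂μ ≤ C := by
  obtain ⟨b, hb_anti, hb_gt, hb_lim⟩ := exists_seq_strictAnti_tendsto a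
  rw [← (isGLB_of_tendsto_atTop hb_anti.antitone hb_lim).iUnion_Ioi_eq,
    setLIntegral_iUnion_of_directed]
  · exact iSup_le fun n ↦ h (b n) (hb_gt n)
  · exact Monotone.directed_le fun _ _ hmn ↦ Set.Ioi_subset_Ioi (hb_anti.antitone hmn)

section Talenti

variable {v : EuclideanSpace ℝ (Fin 2) → ℝ} (hv : Continuous v) (hvs : HasCompactSupport v)
include hv hvs

section Truncated

variable {δ : ℝ} (hδ : 0 < δ) {η : ℝ → ℝ} (hη : Continuous η) (hηδ : ∀ t ≤ δ, η t = 0)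
  (hη0 : 0 ≤ η)
include hδ hη hηδ hη0

theorem lintegral_volume_superlevel_mul_le (hv0 : 0 ≤ v) (hv1 : ContDiffOn ℝ 1 v {x | 0 < v x}) :
    ENNReal.ofReal (2 * √π) * ∫⁻ t in Set.Ioi 0, volume {x | t < v x} * ENNReal.ofReal (η t) ≤
      ∫⁻ x, ENNReal.ofReal (η (v x)) *
        (volume {y | v x < v y} ^ (1 / 2 : ℝ) * ‖fderiv ℝ v x‖ₑ) := by
  let G (t : ℝ) : ℝ := ∫ s in (0 : ℝ)..t, η s
  have hG : ContDiff ℝ 1 G := mod_cast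
    contDiff_succ_intervalIntegral (n := 0) (contDiff_zero.mpr hη) 0
  have hGδ : ∀ t ≤ δ, G t = 0 := fun _ ↦ intervalIntegral_eq_zero_of_le hδ.le hηδ
  have hdG : deriv G = η := funext (hη.deriv_integral η 0)
  have hGmono : Monotone G :=
    monotone_of_deriv_nonneg (hG.differentiable one_ne_zero) (hdG ▸ hη0)
  have hV : ContDiff ℝ 1 (G ∘ v) := contDiff_comp_of_contDiffOn_superlevel hv hv1 hδ hG hGδ
  rw [← lintegral_comp_eq_lintegral_meas_lt_mul volume (.of_forall hv0)
    hv.measurable.aemeasurable (fun _ _ ↦ hη.intervalIntegrable _ _) (.of_forall hη0)]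
  refine (lintegral_le_lintegral_sqrt_volume_superlevel_mul_enorm_fderiv hV
    (hvs.comp_left intervalIntegral.integral_same)
    fun _ ↦ intervalIntegral_nonneg_of_forall_le_eq_zero hδ.le hηδ hη0 _).trans
    (lintegral_mono fun x ↦ ?_)
  rw [enorm_fderiv_comp_eq hv hv1 hδ (hG.differentiable one_ne_zero) hGδ (hdG ▸ hη0), hdG,
    mul_left_comm]
  have hsubset : {y | (G ∘ v) x < (G ∘ v) y} ⊆ {y | v x < v y} := fun _ ↦ hGmono.reflect_lt
  gcongr

variable (hv2 : ContDiffOn ℝ 2 v {x | 0 < v x}) (hηΔ : ∀ x, 0 < v x → η (v x) ≤ -Δ v x)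
include hv2 hηΔ

theorem lintegral_comp_mul_enorm_fderiv_sq_mul_div_le :
    ∫⁻ x, ENNReal.ofReal (η (v x)) * ‖fderiv ℝ v x‖ₑ ^ 2 *
        (volume {y | v x < v y} / rieszMeasure v {y | v x < v y}) ≤
      ∫⁻ t in Set.Ioi 0, volume {x | t < v x} * ENNReal.ofReal (η t) := by
  rw [lintegral_comp_mul_enorm_fderiv_sq_mul_comp hv hvs hδ hη hηδ hv2 hη0
    (fun x hx ↦ neg_nonneg.mp ((hη0 _).trans (hηΔ x hx)))
    (q := fun t ↦ volume {y | t < v y} / rieszMeasure v {y | t < v y})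
    ((measurable_measure_superlevel _ v).div (measurable_measure_superlevel _ v))]
  refine lintegral_mono fun t ↦ ?_
  rw [mul_right_comm]
  gcongr
  exact ENNReal.mul_div_le

-- The term `4π J` produced by Young's inequality is finite thanks to the cutoff `η`, so it can be
-- absorbed into the left-hand side `8π J`.
theorem ofReal_mul_lintegral_volume_superlevel_mul_le_sq (hv0 : 0 ≤ v) :
    ENNReal.ofReal (8 * π) * ∫⁻ t in Set.Ioi 0, volume {x | t < v x} * ENNReal.ofReal (η t) ≤
      rieszMeasure v Set.univ ^ 2 := by
  let c := ENNReal.ofReal (2 * √π)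
  let Φ (x) := rieszMeasure v {y | v x < v y}
  let J := ∫⁻ t in Set.Ioi 0, volume {x | t < v x} * ENNReal.ofReal (η t)
  have hcJ : c ^ 2 * J ≠ ∞ := ENNReal.mul_ne_top (ENNReal.pow_ne_top ENNReal.ofReal_ne_top)
    (lintegral_measure_superlevel_mul_ne_top volume hv hvs hv0 hη hη0)
  have hc : ENNReal.ofReal (8 * π) = 2 * c ^ 2 := by
    rw [← ENNReal.ofReal_pow (by positivity), ← ENNReal.ofReal_ofNat 2,
      ← ENNReal.ofReal_mul zero_le_two, mul_pow, sq_sqrt pi_nonneg]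
    ring_nf
  have hsplit : c ^ 2 * J + c ^ 2 * J ≤ c ^ 2 * J + ∫⁻ x, Φ x ∂rieszMeasure v := calc
    _ = 2 * (c * (c * J)) := by ring
    _ ≤ 2 * (c * ∫⁻ x, ENNReal.ofReal (η (v x)) *
          (volume {y | v x < v y} ^ (1 / 2 : ℝ) * ‖fderiv ℝ v x‖ₑ)) := by
      gcongr
      exact lintegral_volume_superlevel_mul_le hv hvs hδ hη hηδ hη0 hv0 (hv2.of_le one_le_two)
    _ ≤ c ^ 2 * (∫⁻ x, ENNReal.ofReal (η (v x)) * ‖fderiv ℝ v x‖ₑ ^ 2 *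
          (volume {y | v x < v y} / Φ x)) + ∫⁻ x, ENNReal.ofReal (η (v x)) * Φ x :=
      two_mul_lintegral_mul_sqrt_mul_le volume
        (hη.measurable.comp hv.measurable).ennreal_ofReal
        ((measurable_measure_superlevel _ v).comp hv.measurable) _ _ ENNReal.ofReal_ne_top
    _ ≤ c ^ 2 * J + ∫⁻ x, Φ x ∂rieszMeasure v :=
      add_le_add
        (mul_le_mul_right (lintegral_comp_mul_enorm_fderiv_sq_mul_div_le hv hvs hδ hη hηδ hη0
          hv2 hηΔ) _)
        (lintegral_ofReal_comp_mul_le hv hv2 (fun t ht ↦ hηδ t (ht.trans hδ.le)) hηΔ _)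
  calc
    _ = 2 * (c ^ 2 * J) := by rw [hc, mul_assoc]
    _ ≤ 2 * ∫⁻ x, Φ x ∂rieszMeasure v := by
      gcongr
      exact (ENNReal.add_le_add_iff_left hcJ).mp hsplit
    _ ≤ rieszMeasure v Set.univ ^ 2 := two_mul_lintegral_measure_superlevel_le _ hv.measurable

end Truncated

variable (hv0 : 0 ≤ v) (hv2 : ContDiffOn ℝ 2 v {x | 0 < v x})
include hv0 hv2

theorem ofReal_mul_lintegral_volume_superlevel_mul_le_sq_of_continuousOn {f : ℝ → ℝ}
    (hf : ContinuousOn f (Set.Ioi 0)) (hf0 : ∀ t, 0 < t → 0 ≤ f t)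
    (hfΔ : ∀ x, 0 < v x → f (v x) ≤ -Δ v x) :
    ENNReal.ofReal (8 * π) * ∫⁻ t in Set.Ioi 0, volume {x | t < v x} * ENNReal.ofReal (f t) ≤
      rieszMeasure v Set.univ ^ 2 := by
  rw [← lintegral_const_mul' _ _ ENNReal.ofReal_ne_top]
  refine setLIntegral_Ioi_le_of_forall_Ioi fun b hb ↦ ?_
  obtain ⟨η, hη, hη0, hηδ, hηf, hηeq⟩ :=
    exists_continuous_le_eq_of_two_mul_le hf hf0 (half_pos hb)
  calc
    _ = ∫⁻ t in Set.Ioi b,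
          ENNReal.ofReal (8 * π) * (volume {x | t < v x} * ENNReal.ofReal (η t)) :=
      setLIntegral_congr_fun measurableSet_Ioi fun t (ht : b < t) ↦ by
        simp only [hηeq t (by linarith)]
    _ ≤ ∫⁻ t in Set.Ioi 0,
          ENNReal.ofReal (8 * π) * (volume {x | t < v x} * ENNReal.ofReal (η t)) :=
      lintegral_mono_set (Set.Ioi_subset_Ioi hb.le)
    _ ≤ _ := by
      rw [lintegral_const_mul' _ _ ENNReal.ofReal_ne_top]
      exact ofReal_mul_lintegral_volume_superlevel_mul_le_sq hv hvs (half_pos hb) hη hηδ hη0 hv2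
        (fun x hx ↦ (hηf _ hx).trans (hfΔ x hx)) hv0

theorem lintegral_rpow_le_rieszMeasure_univ_sq {γ : ℝ} (hγ : -1 < γ)
    (hΔ : ∀ x, 0 < v x → v x ^ γ ≤ -Δ v x) :
    ENNReal.ofReal (8 * π) * ∫⁻ x, ENNReal.ofReal (v x ^ (1 + γ)) ≤
      ENNReal.ofReal (1 + γ) * rieszMeasure v Set.univ ^ 2 := by
  rw [lintegral_rpow_eq_lintegral_meas_lt_mul _ (.of_forall hv0) hv.measurable.aemeasurable
    (by linarith : 0 < 1 + γ), add_sub_cancel_left, mul_left_comm]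
  gcongr
  exact ofReal_mul_lintegral_volume_superlevel_mul_le_sq_of_continuousOn hv hvs hv0 hv2
    (continuousOn_id.rpow_const fun t (ht : 0 < t) ↦ .inl ht.ne')
    (fun t ht ↦ rpow_nonneg ht.le γ) hΔ

end Talenti

section ZeroExtension

theorem setOf_pos_indicator {α : Type*} {O : Set α} {u : α → ℝ} (hu : ∀ x ∈ O, 0 < u x) :
    {x | 0 < O.indicator u x} = O := by
  ext x
  by_cases hx : x ∈ O <;> simp [hx, hu]

theorem laplacian_indicator {E F : Type*} [NormedAddCommGroup E] [InnerProductSpace ℝ E]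
    [FiniteDimensional ℝ E] [NormedAddCommGroup F] [NormedSpace ℝ F] {O : Set E} (hO : IsOpen O)
    (u : E → F) {x : E} (hx : x ∈ O) : Δ (O.indicator u) x = Δ u x := by
  have heq : O.indicator u =ᶠ[𝓝 x] u := by
    filter_upwards [hO.mem_nhds hx] with y hy using Set.indicator_of_mem hy u
  exact (InnerProductSpace.laplacian_congr_nhds heq).eq_of_nhds

theorem rieszMeasure_indicator_univ {E : Type*} [NormedAddCommGroup E] [InnerProductSpace ℝ E]
    [FiniteDimensional ℝ E] [MeasurableSpace E] [BorelSpace E] {O : Set E} (hO : IsOpen O)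
    {u : E → ℝ} (hu : ∀ x ∈ O, 0 < u x) :
    rieszMeasure (O.indicator u) Set.univ = ∫⁻ x in O, ENNReal.ofReal (-Δ u x) := by
  rw [rieszMeasure, withDensity_apply _ MeasurableSet.univ, Measure.restrict_univ,
    setOf_pos_indicator hu]
  exact setLIntegral_congr_fun hO.measurableSet fun x hx ↦ by
    simp only [laplacian_indicator hO u hx]

end ZeroExtension

theorem lap_eq_laplacian (u : EuclideanSpace ℝ (Fin 2) → ℝ) : lap u = Δ u := by
  ext x
  simp [lap, laplacian_eq_sum_fderiv_fderiv (EuclideanSpace.basisFun (Fin 2) ℝ)]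

section PowerNonlinearity

variable {γ : ℝ} {O : Set (EuclideanSpace ℝ (Fin 2))} {u : EuclideanSpace ℝ (Fin 2) → ℝ}

theorem setLIntegral_rpow_le_sq_setLIntegral_neg_laplacian (hγ : -1 < γ) (hO : IsOpen O)
    (hb : Bornology.IsBounded O) (huc : ContinuousOn u (closure O)) (hu2 : ContDiffOn ℝ 2 u O)
    (huΔ : ∀ x ∈ O, u x ^ γ ≤ -Δ u x) (hu : ∀ x ∈ O, 0 < u x) (hu0 : ∀ x ∈ frontier O, u x = 0) :
    ENNReal.ofReal (8 * π) * ∫⁻ x in O, ENNReal.ofReal (u x ^ (1 + γ)) ≤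
      ENNReal.ofReal (1 + γ) * (∫⁻ x in O, ENNReal.ofReal (-Δ u x)) ^ 2 := by
  have hv : Continuous (O.indicator u) := continuous_indicator hu0 huc
  have hvs : HasCompactSupport (O.indicator u) :=
    .of_support_subset_isCompact hb.isCompact_closure
      (Set.support_indicator_subset.trans subset_closure)
  have hpos : {x | 0 < O.indicator u x} = O := setOf_pos_indicator hu
  have hv2 : ContDiffOn ℝ 2 (O.indicator u) {x | 0 < O.indicator u x} := by
    rw [hpos]
    exact hu2.congr fun x hx ↦ Set.indicator_of_mem hx u
  have hvΔ (x) (hx : 0 < O.indicator u x) : O.indicator u x ^ γ ≤ -Δ (O.indicator u) x := by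
    replace hx : x ∈ O := hpos.subset hx
    rw [laplacian_indicator hO u hx, Set.indicator_of_mem hx]
    exact huΔ x hx
  have hrpow : ∫⁻ x in O, ENNReal.ofReal (u x ^ (1 + γ)) =
      ∫⁻ x, ENNReal.ofReal (O.indicator u x ^ (1 + γ)) := by
    rw [← lintegral_indicator hO.measurableSet]
    refine lintegral_congr fun x ↦ ?_
    by_cases hx : x ∈ O <;> simp [hx, zero_rpow (by linarith : 1 + γ ≠ 0)]
  rw [hrpow, ← rieszMeasure_indicator_univ hO hu]
  exact lintegral_rpow_le_rieszMeasure_univ_sq hv hvs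
    (Set.indicator_nonneg fun x hx ↦ (hu x hx).le) hv2 hγ hvΔ

theorem torsional_rigidity_isoperimetric_inequality_general (hγ : -1 < γ) (hO : IsOpen O)
    (hb : Bornology.IsBounded O) (huc : ContinuousOn u (closure O)) (hu2 : ContDiffOn ℝ 2 u O)
    (huΔ : ∀ x ∈ O, lap u x = -(u x ^ γ)) (hu : ∀ x ∈ O, 0 < u x)
    (hu0 : ∀ x ∈ frontier O, u x = 0) (hint : IntegrableOn (fun x ↦ u x ^ γ) O) :
    ∫ x in O, u x ^ (1 + γ) ≤ ((1 + γ) / (8 * π)) * (∫ x in O, u x ^ γ) ^ 2 := by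
  have huΔ' (x) (hx : x ∈ O) : -Δ u x = u x ^ γ := by
    rw [← lap_eq_laplacian, huΔ x hx, neg_neg]
  have hΔ : ∫⁻ x in O, ENNReal.ofReal (-Δ u x) = ∫⁻ x in O, ENNReal.ofReal (u x ^ γ) :=
    setLIntegral_congr_fun hO.measurableSet fun x hx ↦ congrArg ENNReal.ofReal (huΔ' x hx)
  have hint' : IntegrableOn (fun x ↦ u x ^ (1 + γ)) O :=
    (huc.rpow_const fun _ _ ↦ .inr (by linarith)).integrableOn_compact hb.isCompact_closure
      |>.mono_set subset_closure
  have hnonneg (p : ℝ) : 0 ≤ᵐ[volume.restrict O] fun x ↦ u x ^ p := by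
    filter_upwards [ae_restrict_mem hO.measurableSet] with x hx using rpow_nonneg (hu x hx).le p
  have hlintegral := setLIntegral_rpow_le_sq_setLIntegral_neg_laplacian hγ hO hb huc hu2
    (fun x hx ↦ (huΔ' x hx).ge) hu hu0
  rw [hΔ, ← ofReal_integral_eq_lintegral_ofReal hint' (hnonneg _),
    ← ofReal_integral_eq_lintegral_ofReal hint (hnonneg _),
    ← ENNReal.ofReal_pow (integral_nonneg_of_ae (hnonneg _)),
    ← ENNReal.ofReal_mul (by positivity), ← ENNReal.ofReal_mul (by linarith),
    ENNReal.ofReal_le_ofReal_iff (mul_nonneg (by linarith) (sq_nonneg _))] at hlintegral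
  rwa [div_mul_eq_mul_div, le_div_iff₀' (by positivity)]

end PowerNonlinearity

theorem torsional_rigidity_isoperimetric_inequality
    (γ : ℝ) (hγ0 : 0 ≤ γ) (hγ1 : γ < 1)
    (O : Set (EuclideanSpace ℝ (Fin 2))) (hne : O.Nonempty) (hO : IsOpen O)
    (hb : Bornology.IsBounded O) (hsb : SmoothBoundary O)
    (hsc : SimplyConnectedSpace O)
    (u : EuclideanSpace ℝ (Fin 2) → ℝ) (hu : IsTorsionFn γ O u) :
    ∫ x in O, u x ^ (1 + γ) ≤ ((1 + γ) / (8 * π)) * (∫ x in O, u x ^ γ) ^ 2 := by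
  have hint : IntegrableOn (fun x ↦ u x ^ γ) O :=
    (hu.1.rpow_const fun _ _ ↦ .inr hγ0).integrableOn_compact hb.isCompact_closure
      |>.mono_set subset_closure
  obtain ⟨huc, -, hu2, huΔ, hu, hu0⟩ := hu
  exact torsional_rigidity_isoperimetric_inequality_general (by linarith) hO hb huc hu2 huΔ hu hu0
    hint
end

section
/- Let γ ∈ [0,1), r > 0, and let u be a γ-torsion function of the disk B(0,r) ⊆ ℝ² that is radial, i.e. u(z) depends only on |z|. Then equality holds in the isoperimetric inequality: ∫_{B(0,r)} u^{1+γ} dA = ((1+γ)/(8π)) · (∫_{B(0,r)} u^γ dA)². -/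
open MeasureTheory Real

/-! The flux `s g'(s)` of a radial `u = g(|x|)` satisfies `(s g')' = s Δu`. If `Δu = -f(u)` and
`F' = f`, then `(s g')² / 2 + s² F(g)` has derivative `2 s F(g)`; integrating over `[0, r]`
expresses `∫ F(u)` through the boundary flux, which is `-∫ s f(g)`. The torsion case is
`f(t) = t ^ γ`. Working with `-∫ s f(g)` in place of `s g'` avoids any use of the regularity of `u`
at the boundary. -/

section PolarCoordinates

open Module

theorem setIntegral_ball_fun_norm_addHaar {E F : Type*} [NormedAddCommGroup E] [NormedSpace ℝ E]
    [Nontrivial E] [FiniteDimensional ℝ E] [MeasurableSpace E] [BorelSpace E]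
    [NormedAddCommGroup F] [NormedSpace ℝ F] (μ : Measure E) [μ.IsAddHaarMeasure]
    (f : ℝ → F) {r : ℝ} (hr : 0 ≤ r) :
    ∫ x in Metric.ball (0 : E) r, f ‖x‖ ∂μ =
      finrank ℝ E • μ.real (Metric.ball 0 1) •
        ∫ s in (0 : ℝ)..r, s ^ (finrank ℝ E - 1) • f s := by
  have h_indicator : ∀ x : E, (Metric.ball (0 : E) r).indicator (fun x => f ‖x‖) x =
      (Set.Iio r).indicator f ‖x‖ := fun x => by simp [Set.indicator]
  rw [← integral_indicator measurableSet_ball]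
  simp only [h_indicator]
  rw [integral_fun_norm_addHaar]
  simp only [← Set.indicator_smul_apply (Set.Iio r) (fun s : ℝ => s ^ (finrank ℝ E - 1)) f]
  rw [setIntegral_indicator measurableSet_Iio, Set.Ioi_inter_Iio,
    ← integral_Ioc_eq_integral_Ioo, ← intervalIntegral.integral_of_le hr]

theorem setIntegral_ball_fun_norm_fin_two {F : Type*} [NormedAddCommGroup F] [NormedSpace ℝ F]
    (f : ℝ → F) {r : ℝ} (hr : 0 ≤ r) :
    ∫ x in Metric.ball (0 : EuclideanSpace ℝ (Fin 2)) r, f ‖x‖ =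
      (2 * π) • ∫ s in (0 : ℝ)..r, s • f s := by
  have h_disk : volume.real (Metric.ball (0 : EuclideanSpace ℝ (Fin 2)) 1) = π := by
    simp [Measure.real, pi_nonneg]
  rw [setIntegral_ball_fun_norm_addHaar volume f hr, h_disk, finrank_euclideanSpace_fin,
    two_nsmul, ← add_smul, ← two_mul]
  simp only [Nat.add_one_sub_one, pow_one]

end PolarCoordinates

section RadialLaplacian

theorem hasDerivAt_id_smul {E : Type*} [NormedAddCommGroup E] [NormedSpace ℝ E] (v : E) (s : ℝ) :
    HasDerivAt (fun t : ℝ => t • v) v s := by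
  simpa using (hasDerivAt_id s).smul_const v

theorem hasDerivAt_fderiv_comp_apply {E F : Type*} [NormedAddCommGroup E] [NormedSpace ℝ E]
    [NormedAddCommGroup F] [NormedSpace ℝ F] {u : E → F} {c v : ℝ → E} {c' v' : E} {t : ℝ}
    (hu : ContDiffAt ℝ 2 u (c t)) (hc : HasDerivAt c c' t) (hv : HasDerivAt v v' t) :
    HasDerivAt (fun s => fderiv ℝ u (c s) (v s))
      (fderiv ℝ (fderiv ℝ u) (c t) c' (v t) + fderiv ℝ u (c t) v') t := by
  have hDu : DifferentiableAt ℝ (fderiv ℝ u) (c t) :=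
    (hu.fderiv_right (m := 1) (by norm_num)).differentiableAt one_ne_zero
  exact (hDu.hasFDerivAt.comp_hasDerivAt t hc).clm_apply hv

theorem norm_cos_smul_add_sin_smul {E : Type*} [NormedAddCommGroup E] [InnerProductSpace ℝ E]
    {x w : E} (hxw : inner ℝ x w = 0) (hw : ‖w‖ = ‖x‖) (θ : ℝ) :
    ‖cos θ • x + sin θ • w‖ = ‖x‖ := by
  rw [← sq_eq_sq₀ (norm_nonneg _) (norm_nonneg _), sq,
    norm_add_sq_eq_norm_sq_add_norm_sq_real (by simp [inner_smul_left, inner_smul_right, hxw])]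
  simp only [norm_smul, hw, norm_eq_abs]
  linear_combination ‖x‖ ^ 2 * cos_sq_add_sin_sq θ + ‖x‖ ^ 2 * (sq_abs (cos θ) + sq_abs (sin θ))

-- Differentiate `u` twice along the circle `θ ↦ cos θ • x + sin θ • w`, on which it is constant.
theorem fderiv_fderiv_apply_of_radial {E F : Type*} [NormedAddCommGroup E] [InnerProductSpace ℝ E]
    [NormedAddCommGroup F] [NormedSpace ℝ F] {u : E → F} {φ : ℝ → F} (hφ : ∀ z, u z = φ ‖z‖)
    {x w : E} (hu : ContDiffAt ℝ 2 u x) (hxw : inner ℝ x w = 0) (hw : ‖w‖ = ‖x‖) :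
    fderiv ℝ (fderiv ℝ u) x w w = fderiv ℝ u x x := by
  set c : ℝ → E := fun θ => cos θ • x + sin θ • w
  set c' : ℝ → E := fun θ => -sin θ • x + cos θ • w
  have hc : ∀ θ, HasDerivAt c (c' θ) θ := fun θ =>
    ((hasDerivAt_cos θ).smul_const x).add ((hasDerivAt_sin θ).smul_const w)
  have hc' : HasDerivAt c' (-x) 0 := by
    refine HasDerivAt.congr_deriv (f' := -cos 0 • x + -sin 0 • w) ?_ (by simp)
    exact ((hasDerivAt_sin 0).neg.smul_const x).add ((hasDerivAt_cos 0).smul_const w)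
  have hc0 : c 0 = x := by simp [c]
  have hc'0 : c' 0 = w := by simp [c']
  have hu_c : ∀ θ, u (c θ) = φ ‖x‖ := fun θ => by
    rw [hφ, norm_cos_smul_add_sin_smul hxw hw]
  have h_tangential : ∀ᶠ θ in nhds 0, fderiv ℝ u (c θ) (c' θ) = 0 := by
    have h_contDiff : ∀ᶠ y in nhds (c 0), ContDiffAt ℝ 2 u y :=
      hc0.symm ▸ hu.eventually (by simp)
    filter_upwards [(hc 0).continuousAt.eventually h_contDiff] with θ hθ
    have h_comp :=
      (hθ.differentiableAt two_ne_zero).hasFDerivAt.comp_hasDerivAt θ (hc θ)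
    exact h_comp.unique ((hasDerivAt_const θ (φ ‖x‖)).congr_of_eventuallyEq (.of_forall hu_c))
  have h_second := (hasDerivAt_fderiv_comp_apply (hc0.symm ▸ hu) (hc 0) hc').unique
    ((hasDerivAt_const 0 (0 : F)).congr_of_eventuallyEq h_tangential)
  rw [hc0, hc'0, map_neg] at h_second
  exact add_neg_eq_zero.mp h_second

theorem continuousAt_lap {u : EuclideanSpace ℝ (Fin 2) → ℝ} {x : EuclideanSpace ℝ (Fin 2)}
    (hu : ContDiffAt ℝ 2 u x) : ContinuousAt (lap u) x := by
  have hD2u : ContinuousAt (fderiv ℝ (fderiv ℝ u)) x :=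
    ((hu.fderiv_right (m := 1) (by norm_num)).fderiv_right (m := 0) (by norm_num)).continuousAt
  unfold lap
  fun_prop

theorem norm_sq_mul_lap_of_radial {u : EuclideanSpace ℝ (Fin 2) → ℝ} {φ : ℝ → ℝ}
    (hφ : ∀ z, u z = φ ‖z‖) {x : EuclideanSpace ℝ (Fin 2)} (hu : ContDiffAt ℝ 2 u x) :
    ‖x‖ ^ 2 * lap u x = fderiv ℝ (fderiv ℝ u) x x x + fderiv ℝ u x x := by
  set e : Fin 2 → EuclideanSpace ℝ (Fin 2) := fun i => EuclideanSpace.single i 1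
  set w : EuclideanSpace ℝ (Fin 2) := (-x 1) • e 0 + x 0 • e 1
  have hx : x = x 0 • e 0 + x 1 • e 1 := by
    ext i; fin_cases i <;> simp [e]
  have hxw : inner ℝ x w = 0 := by
    simp [w, e, PiLp.inner_apply, Fin.sum_univ_two]; ring
  have hw : ‖w‖ = ‖x‖ := by
    simp [w, e, EuclideanSpace.norm_eq, Fin.sum_univ_two, add_comm]
  have h_norm : ‖x‖ ^ 2 = x 0 ^ 2 + x 1 ^ 2 := by
    simp [EuclideanSpace.norm_sq_eq, Fin.sum_univ_two]
  set D := fderiv ℝ (fderiv ℝ u) x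
  have hDx : D x x = D (x 0 • e 0 + x 1 • e 1) (x 0 • e 0 + x 1 • e 1) := by rw [← hx]
  have hDw : D w w = fderiv ℝ u x x := fderiv_fderiv_apply_of_radial hφ hu hxw hw
  have h_lap : lap u x = D (e 0) (e 0) + D (e 1) (e 1) := Fin.sum_univ_two _
  rw [← hDw, hDx, h_lap, h_norm]
  simp only [w, map_add, map_smul, add_apply, smul_apply, smul_eq_mul]
  ring

theorem hasDerivAt_fderiv_smul_of_radial {u : EuclideanSpace ℝ (Fin 2) → ℝ} {φ : ℝ → ℝ}
    (hφ : ∀ z, u z = φ ‖z‖) {v : EuclideanSpace ℝ (Fin 2)} (hv : ‖v‖ = 1) {s : ℝ} (hs : s ≠ 0)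
    (hu : ContDiffAt ℝ 2 u (s • v)) :
    HasDerivAt (fun t => fderiv ℝ u (t • v) (t • v)) (s * lap u (s • v)) s := by
  have h_ray := hasDerivAt_id_smul v s
  refine (hasDerivAt_fderiv_comp_apply hu h_ray h_ray).congr_deriv (mul_left_cancel₀ hs ?_)
  have h_lap := norm_sq_mul_lap_of_radial hφ hu
  simp only [norm_smul, hv, mul_one, norm_eq_abs, sq_abs, map_smul,
    smul_apply, smul_eq_mul] at h_lap ⊢
  linear_combination -h_lap

theorem fderiv_smul_eq_integral_lap_of_radial {u : EuclideanSpace ℝ (Fin 2) → ℝ} {φ : ℝ → ℝ}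
    (hφ : ∀ z, u z = φ ‖z‖) {v : EuclideanSpace ℝ (Fin 2)} (hv : ‖v‖ = 1) {s : ℝ} (hs : 0 ≤ s)
    (hu : ∀ t ∈ Set.Icc 0 s, ContDiffAt ℝ 2 u (t • v)) :
    fderiv ℝ u (s • v) (s • v) = ∫ t in (0 : ℝ)..s, t * lap u (t • v) := by
  have h_ray := hasDerivAt_id_smul v
  have h_flux : ContinuousOn (fun t => fderiv ℝ u (t • v) (t • v)) (Set.Icc 0 s) := fun t ht =>
    (hasDerivAt_fderiv_comp_apply (hu t ht) (h_ray t) (h_ray t)).continuousAt.continuousWithinAt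
  have h_lap : ContinuousOn (fun t : ℝ => t * lap u (t • v)) (Set.Icc 0 s) := fun t ht =>
    (continuousAt_id.mul ((continuousAt_lap (hu t ht)).comp (f := fun t : ℝ => t • v)
      (h_ray t).continuousAt)).continuousWithinAt
  rw [intervalIntegral.integral_eq_sub_of_hasDerivAt_of_le hs h_flux
    (fun t ht => hasDerivAt_fderiv_smul_of_radial hφ hv ht.1.ne' (hu t ⟨ht.1.le, ht.2.le⟩))
    (h_lap.intervalIntegrable_of_Icc hs)]
  simp

end RadialLaplacian

section Pohozaev

theorem hasDerivAt_integral_of_continuousOn_Icc {E : Type*} [NormedAddCommGroup E]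
    [NormedSpace ℝ E] [CompleteSpace E] {w : ℝ → E} {a b s : ℝ}
    (hw : ContinuousOn w (Set.Icc a b)) (hs : s ∈ Set.Ioo a b) :
    HasDerivAt (fun x => ∫ t in a..x, w t) (w s) s :=
  intervalIntegral.integral_hasDerivAt_right
    ((hw.mono (Set.Icc_subset_Icc_right hs.2.le)).intervalIntegrable_of_Icc hs.1.le)
    ((hw.mono Set.Ioo_subset_Icc_self).stronglyMeasurableAtFilter isOpen_Ioo s hs)
    (hw.continuousAt (Icc_mem_nhds hs.1 hs.2))

theorem integral_mul_primitive_comp_of_flux {f F g g' : ℝ → ℝ} {r : ℝ} (hr : 0 ≤ r)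
    (hf : Continuous f) (hF : ∀ t, HasDerivAt F (f t) t) (hg : ContinuousOn g (Set.Icc 0 r))
    (hg' : ∀ s ∈ Set.Ioo 0 r, HasDerivAt g (g' s) s)
    (h_flux : ∀ s ∈ Set.Ioo 0 r, s * g' s = -∫ t in (0 : ℝ)..s, t * f (g t)) :
    ∫ s in (0 : ℝ)..r, s * F (g s) =
      r ^ 2 / 2 * F (g r) + (∫ s in (0 : ℝ)..r, s * f (g s)) ^ 2 / 4 := by
  set I : ℝ → ℝ := fun s => ∫ t in (0 : ℝ)..s, t * f (g t)
  have h_density : ContinuousOn (fun s => s * f (g s)) (Set.Icc 0 r) :=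
    continuousOn_id.mul (hf.comp_continuousOn hg)
  have hI_cont : ContinuousOn I (Set.Icc 0 r) := by
    rw [← Set.uIcc_of_le hr] at h_density ⊢
    exact intervalIntegral.continuousOn_primitive_interval
      (h_density.integrableOn_compact isCompact_uIcc)
  have hF_cont : Continuous F := continuous_iff_continuousAt.mpr fun t => (hF t).continuousAt
  have hFg : ContinuousOn (fun s => F (g s)) (Set.Icc 0 r) := hF_cont.comp_continuousOn hg
  have h_energy : ∀ s ∈ Set.Ioo 0 r,
      HasDerivAt (fun s => I s ^ 2 / 2 + s ^ 2 * F (g s)) (2 * (s * F (g s))) s := by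
    intro s hs
    have hI_deriv := hasDerivAt_integral_of_continuousOn_Icc h_density hs
    refine (((hI_deriv.pow 2).div_const 2).add
      ((hasDerivAt_pow 2 s).mul ((hF (g s)).comp s (hg' s hs)))).congr_deriv ?_
    simp only [Function.comp_apply]
    push_cast
    linear_combination s * f (g s) * h_flux s hs
  have h_ftc := intervalIntegral.integral_eq_sub_of_hasDerivAt_of_le hr
    (f := fun s => I s ^ 2 / 2 + s ^ 2 * F (g s))
    (((hI_cont.pow 2).div_const 2).add ((continuousOn_id.pow 2).mul hFg)) h_energy
    ((continuousOn_const.mul (continuousOn_id.mul hFg)).intervalIntegrable_of_Icc hr)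
  have hI_zero : I 0 = 0 := intervalIntegral.integral_same
  rw [intervalIntegral.integral_const_mul, hI_zero] at h_ftc
  linear_combination h_ftc / 2

theorem mul_fderiv_eq_neg_integral_of_radial {f φ : ℝ → ℝ} {u : EuclideanSpace ℝ (Fin 2) → ℝ}
    (hφ : ∀ z, u z = φ ‖z‖) {v : EuclideanSpace ℝ (Fin 2)} (hv : ‖v‖ = 1) {s : ℝ} (hs : 0 ≤ s)
    (hu : ∀ t ∈ Set.Icc 0 s, ContDiffAt ℝ 2 u (t • v))
    (hu_lap : ∀ t ∈ Set.Icc 0 s, lap u (t • v) = -f (u (t • v))) :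
    s * fderiv ℝ u (s • v) v = -∫ t in (0 : ℝ)..s, t * f (u (t • v)) := by
  rw [← smul_eq_mul, ← map_smul, fderiv_smul_eq_integral_lap_of_radial hφ hv hs hu,
    ← intervalIntegral.integral_neg]
  refine intervalIntegral.integral_congr fun t ht => ?_
  rw [Set.uIcc_of_le hs] at ht
  simp only [hu_lap t ht, mul_neg]

theorem setIntegral_ball_primitive_comp_of_radial {f F : ℝ → ℝ} (hf : Continuous f)
    (hF : ∀ t, HasDerivAt F (f t) t) {r : ℝ} (hr : 0 ≤ r) {u : EuclideanSpace ℝ (Fin 2) → ℝ}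
    (hu_cont : ContinuousOn u (Metric.closedBall 0 r))
    (hu_diff : ContDiffOn ℝ 2 u (Metric.ball 0 r))
    (hu_lap : ∀ x ∈ Metric.ball 0 r, lap u x = -f (u x))
    {c : ℝ} (hu_sphere : ∀ x ∈ Metric.sphere 0 r, u x = c)
    {φ : ℝ → ℝ} (hφ : ∀ z, u z = φ ‖z‖) :
    ∫ x in Metric.ball 0 r, F (u x) =
      π * r ^ 2 * F c + 1 / (8 * π) * (∫ x in Metric.ball 0 r, f (u x)) ^ 2 := by
  obtain ⟨v, hv⟩ := exists_norm_eq (EuclideanSpace ℝ (Fin 2)) zero_le_one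
  have h_norm : ∀ s : ℝ, 0 ≤ s → ‖s • v‖ = s := fun s hs => by
    rw [norm_smul, hv, mul_one, norm_of_nonneg hs]
  have h_ball : ∀ s ∈ Set.Ico 0 r, s • v ∈ Metric.ball 0 r := fun s hs => by
    rw [mem_ball_zero_iff, h_norm s hs.1]; exact hs.2
  have h_diff : ∀ s ∈ Set.Ico 0 r, ContDiffAt ℝ 2 u (s • v) := fun s hs =>
    hu_diff.contDiffAt (Metric.isOpen_ball.mem_nhds (h_ball s hs))
  set g : ℝ → ℝ := fun s => u (s • v) with hg
  have hu_g : ∀ x, u x = g ‖x‖ := fun x => by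
    simp only [hg, hφ, h_norm _ (norm_nonneg x)]
  have hg_cont : ContinuousOn g (Set.Icc 0 r) :=
    hu_cont.comp (by fun_prop) fun s hs => by
      rw [mem_closedBall_zero_iff, h_norm s hs.1]; exact hs.2
  have hg_deriv : ∀ s ∈ Set.Ioo 0 r, HasDerivAt g (fderiv ℝ u (s • v) v) s := fun s hs =>
    ((h_diff s ⟨hs.1.le, hs.2⟩).differentiableAt two_ne_zero).hasFDerivAt.comp_hasDerivAt s
      (hasDerivAt_id_smul v s)
  have h_flux : ∀ s ∈ Set.Ioo 0 r,
      s * fderiv ℝ u (s • v) v = -∫ t in (0 : ℝ)..s, t * f (g t) := fun s hs =>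
    have h_sub : ∀ t ∈ Set.Icc 0 s, t ∈ Set.Ico 0 r := fun _ ht => ⟨ht.1, ht.2.trans_lt hs.2⟩
    mul_fderiv_eq_neg_integral_of_radial hφ hv hs.1.le (fun t ht => h_diff t (h_sub t ht))
      fun t ht => hu_lap _ (h_ball t (h_sub t ht))
  have hg_r : g r = c := hu_sphere _ (by rw [mem_sphere_zero_iff_norm, h_norm r hr])
  simp only [hu_g, setIntegral_ball_fun_norm_fin_two (fun s => F (g s)) hr,
    setIntegral_ball_fun_norm_fin_two (fun s => f (g s)) hr, smul_eq_mul,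
    integral_mul_primitive_comp_of_flux hr hf hF hg_cont hg_deriv h_flux, hg_r]
  field_simp
  ring

end Pohozaev

theorem torsional_rigidity_isoperimetric_equality_radial_general {γ : ℝ} (hγ : 0 ≤ γ) {r : ℝ}
    (hr : 0 < r) {u : EuclideanSpace ℝ (Fin 2) → ℝ}
    (hu : IsTorsionFn γ (Metric.ball (0 : EuclideanSpace ℝ (Fin 2)) r) u)
    (hrad : ∃ φ : ℝ → ℝ, ∀ z, u z = φ ‖z‖) :
    ∫ x in Metric.ball (0 : EuclideanSpace ℝ (Fin 2)) r, u x ^ (1 + γ) =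
      ((1 + γ) / (8 * π)) *
        (∫ x in Metric.ball (0 : EuclideanSpace ℝ (Fin 2)) r, u x ^ γ) ^ 2 := by
  obtain ⟨φ, hφ⟩ := hrad
  obtain ⟨hu_cont, -, hu_diff, hu_lap, -, hu_zero⟩ := hu
  rw [closure_ball _ hr.ne'] at hu_cont
  rw [frontier_ball _ hr.ne'] at hu_zero
  have hγ' : 1 + γ ≠ 0 := by positivity
  have h_primitive : ∀ t : ℝ, HasDerivAt (fun t => t ^ (1 + γ) / (1 + γ)) (t ^ γ) t := fun t => by
    simpa [hγ'] using
      (hasDerivAt_rpow_const (x := t) (p := 1 + γ) (.inr (by linarith))).div_const (1 + γ)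
  have h_pohozaev := setIntegral_ball_primitive_comp_of_radial (continuous_rpow_const hγ)
    h_primitive hr.le hu_cont hu_diff hu_lap hu_zero hφ
  rw [integral_div, zero_rpow hγ', zero_div, mul_zero, zero_add, div_eq_iff hγ'] at h_pohozaev
  rw [h_pohozaev]
  ring

theorem torsional_rigidity_isoperimetric_equality_radial
    (γ : ℝ) (hγ0 : 0 ≤ γ) (hγ1 : γ < 1) (r : ℝ) (hr : 0 < r)
    (u : EuclideanSpace ℝ (Fin 2) → ℝ)
    (hu : IsTorsionFn γ (Metric.ball (0 : EuclideanSpace ℝ (Fin 2)) r) u)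
    (hrad : ∃ φ : ℝ → ℝ, ∀ z, u z = φ ‖z‖) :
    ∫ x in Metric.ball (0 : EuclideanSpace ℝ (Fin 2)) r, u x ^ (1 + γ) =
      ((1 + γ) / (8 * π)) *
        (∫ x in Metric.ball (0 : EuclideanSpace ℝ (Fin 2)) r, u x ^ γ) ^ 2 :=
  torsional_rigidity_isoperimetric_equality_radial_general hγ0 hr hu hrad
end

section
/- Let γ ∈ [0,1) and 0 < R ≤ ∞. Suppose U : (0,R) × ℝ² → ℝ, written U(r,z) = u_r(z), is continuously differentiable jointly in (r,z), and for each r ∈ (0,R) the function u_r is a γ-torsion function of the disk B(0,r) ⊆ ℝ² ≅ ℂ. Then the function T(r) := ∫_{B(0,r)} |∇u_r|² dA is differentiable on (0,R) and T′(r) = ((1+γ)/(1−γ)) · r · ∫_0^{2π} |∇u_r(r e^{iθ})|² dθ. (This is the paper's first variation formula (3.2) applied to the radial dilation flow of disks, identity (4.3).) -/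
open MeasureTheory Real ENNReal

/-- The Euclidean Laplacian on `ℝ² ≅ ℂ`. -/
noncomputable def lapC (u : ℂ → ℝ) (x : ℂ) : ℝ :=
  fderiv ℝ (fderiv ℝ u) x 1 1 + fderiv ℝ (fderiv ℝ u) x Complex.I Complex.I

/-- `u` is a `γ`-torsion function of `O ⊆ ℂ`: continuous on the closure, `C¹` up to the
boundary, `C²` inside, with `Δu = -u^γ`, `u > 0` in `O` and `u = 0` on `∂O`. -/
def IsTorsionFnC (γ : ℝ) (O : Set ℂ) (u : ℂ → ℝ) : Prop :=
  ContinuousOn u (closure O) ∧ ContDiffOn ℝ 1 u (closure O) ∧ ContDiffOn ℝ 2 u O ∧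
  (∀ x ∈ O, lapC u x = -(u x ^ γ)) ∧ (∀ x ∈ O, 0 < u x) ∧ (∀ x ∈ frontier O, u x = 0)

/-!
If two torsion functions `v` on `O` and `w` on a neighbourhood of `closure O` satisfied
`t = max v / w > 1`, then `v - t w` would have an interior maximum, where its Laplacian
`(t - t ^ γ) w ^ γ` is positive. Comparing with slightly dilated copies, the torsion function of a
disk is unique; hence `u_s` is the dilation of `u_r` and `T(s) = (s / r) ^ (4 / (1 - γ)) T(r)`, so
that `T'(r) = 4 / ((1 - γ) r) T(r)`.

It remains to express `T(r)` by boundary values. Green's identity gives `T(r) = ∫ u ^ (1 + γ)`, and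
the divergence theorem for the Pohozaev field, together with `∇ u ∥ z` on the boundary circle,
turns the latter into `(1 + γ) / 4 * r ^ 2 * ∫ ‖∇ u_r(r e^{iθ})‖ ^ 2 dθ`.
-/

section Development

open Metric Set Filter InnerProductSpace
open scoped Topology Gradient Pointwise Laplacian

section VectorCalculus

variable {E : Type*} [NormedAddCommGroup E] [InnerProductSpace ℝ E]

/-- The divergence of a vector field, as the trace of its derivative. -/
noncomputable def divergence (X : E → E) (x : E) : ℝ :=
  LinearMap.trace ℝ E (fderiv ℝ X x)

theorem divergence_fun_add {X Y : E → E} {x : E} (hX : DifferentiableAt ℝ X x)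
    (hY : DifferentiableAt ℝ Y x) :
    divergence (fun y ↦ X y + Y y) x = divergence X x + divergence Y x := by
  simp [divergence, fderiv_fun_add hX hY]

theorem divergence_id [FiniteDimensional ℝ E] (x : E) :
    divergence (fun y : E ↦ y) x = Module.finrank ℝ E := by
  simp [divergence]

theorem divergence_fun_smul [FiniteDimensional ℝ E] {f : E → ℝ} {X : E → E} {x : E}
    (hf : DifferentiableAt ℝ f x) (hX : DifferentiableAt ℝ X x) :
    divergence (fun y ↦ f y • X y) x = f x * divergence X x + fderiv ℝ f x (X x) := by
  simp [divergence, fderiv_fun_smul hf hX, LinearMap.trace_smulRight]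

theorem inner_fderiv_gradient [CompleteSpace E] (u : E → ℝ) (x v w : E) :
    ⟪fderiv ℝ (∇ u) x v, w⟫_ℝ = fderiv ℝ (fderiv ℝ u) x v w := by
  have hgrad : ∇ u = (toDual ℝ E).symm ∘ fderiv ℝ u := rfl
  have hfderiv := (toDual ℝ E).symm.comp_fderiv (f := fderiv ℝ u) (x := x)
  rw [hgrad, hfderiv]
  exact toDual_symm_apply

theorem divergence_gradient [FiniteDimensional ℝ E] (u : E → ℝ) (x : E) :
    divergence (∇ u) x = Δ u x := by
  rw [divergence, LinearMap.trace_eq_sum_inner _ (stdOrthonormalBasis ℝ E),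
    laplacian_eq_iteratedFDeriv_stdOrthonormalBasis]
  exact Finset.sum_congr rfl fun i _ ↦ by
    simp [real_inner_comm (fderiv ℝ (∇ u) x _), inner_fderiv_gradient, iteratedFDeriv_two_apply]

theorem differentiableAt_gradient [CompleteSpace E] {u : E → ℝ} {x : E}
    (hu : ContDiffAt ℝ 2 u x) : DifferentiableAt ℝ (∇ u) x :=
  (toDual ℝ E).symm.differentiableAt.comp x
    ((hu.fderiv_right (m := 1) (by norm_num)).differentiableAt one_ne_zero)

theorem divergence_smul_gradient [FiniteDimensional ℝ E] {u : E → ℝ} {x : E}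
    (hu : ContDiffAt ℝ 2 u x) :
    divergence (fun y ↦ u y • ∇ u y) x = u x * Δ u x + ‖∇ u x‖ ^ 2 := by
  rw [divergence_fun_smul (hu.differentiableAt two_ne_zero) (differentiableAt_gradient hu),
    divergence_gradient, ← inner_gradient_left, real_inner_self_eq_norm_sq]

/-- The vector field behind the Rellich–Pohozaev identity for `Δ u = -F' ∘ u`: the contraction of
the stress–energy tensor of the equation with the generator `x` of dilations. -/
noncomputable def pohozaevField [CompleteSpace E] (F : ℝ → ℝ) (u : E → ℝ) (x : E) : E :=
  ⟪x, ∇ u x⟫_ℝ • ∇ u x + (F (u x) - ‖∇ u x‖ ^ 2 / 2) • x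

theorem continuousOn_pohozaevField [CompleteSpace E] {F : ℝ → ℝ} {u : E → ℝ} {s : Set E}
    (hu : ContinuousOn u s) (hgrad : ContinuousOn (∇ u) s) (hF : Continuous F) :
    ContinuousOn (pohozaevField F u) s := by
  have hradial : ContinuousOn (fun x ↦ ⟪x, ∇ u x⟫_ℝ) s := continuousOn_id.inner hgrad
  have henergy : ContinuousOn (fun x ↦ F (u x) - ‖∇ u x‖ ^ 2 / 2) s :=
    (hF.comp_continuousOn hu).sub ((hgrad.norm.pow 2).div_const 2)
  exact (hradial.smul hgrad).add (henergy.smul continuousOn_id)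

theorem differentiableAt_pohozaevField [CompleteSpace E] {F : ℝ → ℝ} {u : E → ℝ} {x : E}
    (hu : ContDiffAt ℝ 2 u x) (hF : DifferentiableAt ℝ F (u x)) :
    DifferentiableAt ℝ (pohozaevField F u) x := by
  have hgrad := differentiableAt_gradient hu
  have hFu : DifferentiableAt ℝ (fun y ↦ F (u y)) x :=
    hF.comp x (hu.differentiableAt two_ne_zero)
  have hsq : DifferentiableAt ℝ (fun y ↦ ‖∇ u y‖ ^ 2 / 2) x := by
    simpa only [div_eq_mul_inv] using (hgrad.norm_sq ℝ).mul_const (2 : ℝ)⁻¹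
  exact ((differentiableAt_id.inner ℝ hgrad).smul hgrad).add
    ((hFu.sub hsq).smul differentiableAt_id)

theorem divergence_pohozaevField [FiniteDimensional ℝ E] {F : ℝ → ℝ} {F' : ℝ} {u : E → ℝ} {x : E}
    (hu : ContDiffAt ℝ 2 u x) (hF : HasDerivAt F F' (u x)) :
    divergence (pohozaevField F u) x =
      (Δ u x + F') * ⟪x, ∇ u x⟫_ℝ + Module.finrank ℝ E * F (u x) +
        (1 - Module.finrank ℝ E / 2) * ‖∇ u x‖ ^ 2 := by
  have hgrad := differentiableAt_gradient hu
  have hdu : DifferentiableAt ℝ u x := hu.differentiableAt two_ne_zero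
  have hradial : DifferentiableAt ℝ (fun y ↦ ⟪y, ∇ u y⟫_ℝ) x := differentiableAt_id.inner ℝ hgrad
  have hsymm : ⟪x, fderiv ℝ (∇ u) x (∇ u x)⟫_ℝ = ⟪∇ u x, fderiv ℝ (∇ u) x x⟫_ℝ := by
    rw [real_inner_comm, inner_fderiv_gradient, real_inner_comm, inner_fderiv_gradient]
    exact hu.isSymmSndFDerivAt (by simp) _ _
  have henergy : HasFDerivAt (fun y ↦ F (u y) - ‖∇ u y‖ ^ 2 / 2)
      (F' • fderiv ℝ u x - (2⁻¹ : ℝ) • 2 • (innerSL ℝ (∇ u x)).comp (fderiv ℝ (∇ u) x)) x := by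
    have hFu : HasFDerivAt (fun y ↦ F (u y)) (F' • fderiv ℝ u x) x :=
      hF.comp_hasFDerivAt x hdu.hasFDerivAt
    simpa only [div_eq_inv_mul] using hFu.fun_sub (hgrad.hasFDerivAt.norm_sq.const_mul 2⁻¹)
  have hfield : pohozaevField F u =
      fun y ↦ ⟪y, ∇ u y⟫_ℝ • ∇ u y + (F (u y) - ‖∇ u y‖ ^ 2 / 2) • y := rfl
  rw [hfield, divergence_fun_add (hradial.fun_smul hgrad)
      (henergy.differentiableAt.fun_smul differentiableAt_fun_id),
    divergence_fun_smul hradial hgrad,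
    divergence_fun_smul henergy.differentiableAt differentiableAt_fun_id, divergence_gradient,
    divergence_id, henergy.fderiv, fderiv_inner_apply ℝ differentiableAt_fun_id hgrad, hsymm]
  simp only [sub_apply, smul_apply, ContinuousLinearMap.comp_apply, ← inner_gradient_left,
    fderiv_fun_id, ContinuousLinearMap.id_apply, real_inner_self_eq_norm_sq, coe_innerSL_apply,
    smul_eq_mul, nsmul_eq_mul, Nat.cast_ofNat, real_inner_comm x]
  ring

end VectorCalculus

section SecondDerivativeTest

theorem deriv_deriv_nonpos_of_isLocalMax {g : ℝ → ℝ} {a : ℝ} (hmax : IsLocalMax g a)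
    (hg : ContinuousAt g a) : deriv (deriv g) a ≤ 0 := by
  by_contra! hpos
  have hmin : IsLocalMin g a := isLocalMin_of_deriv_deriv_pos hpos hmax.deriv_eq_zero hg
  have hconst : g =ᶠ[𝓝 a] fun _ ↦ g a := by
    filter_upwards [hmax, hmin] with t hle hge using le_antisymm hle hge
  simp [hconst.deriv.deriv_eq] at hpos

variable {E : Type*} [NormedAddCommGroup E]

theorem fderiv_fderiv_apply_self_nonpos_of_isLocalMax [NormedSpace ℝ E] {f : E → ℝ} {x : E}
    (hf : ContDiffAt ℝ 2 f x) (hmax : IsLocalMax f x) (v : E) :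
    fderiv ℝ (fderiv ℝ f) x v v ≤ 0 := by
  have hline (t : ℝ) : HasDerivAt (fun s : ℝ ↦ x + s • v) v t := by
    simpa using ((hasDerivAt_id t).smul_const v).const_add x
  have htendsto : Tendsto (fun t : ℝ ↦ x + t • v) (𝓝 0) (𝓝 x) := by
    simpa using (hline 0).continuousAt.tendsto
  have hderiv : deriv (fun t : ℝ ↦ f (x + t • v)) =ᶠ[𝓝 0] fun t ↦ fderiv ℝ f (x + t • v) v := by
    filter_upwards [htendsto.eventually (hf.eventually (by simp))] with t ht
    exact ((ht.differentiableAt two_ne_zero).hasFDerivAt.comp_hasDerivAt t (hline t)).deriv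
  have hfderiv : HasFDerivAt (fderiv ℝ f) (fderiv ℝ (fderiv ℝ f) x) (x + (0 : ℝ) • v) := by
    simpa using ((hf.fderiv_right (m := 1) (by norm_num)).differentiableAt one_ne_zero).hasFDerivAt
  have hderiv2 : deriv (deriv fun t : ℝ ↦ f (x + t • v)) 0 = fderiv ℝ (fderiv ℝ f) x v v := by
    have hcomp : HasDerivAt (fun t : ℝ ↦ fderiv ℝ f (x + t • v)) (fderiv ℝ (fderiv ℝ f) x v) 0 :=
      hfderiv.comp_hasDerivAt 0 (hline 0)
    rw [hderiv.deriv_eq]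
    exact ((ContinuousLinearMap.apply ℝ ℝ v).hasFDerivAt.comp_hasDerivAt 0 hcomp).deriv
  rw [← hderiv2]
  refine deriv_deriv_nonpos_of_isLocalMax ?_ ?_
  · simpa [IsLocalMax, IsMaxFilter] using htendsto.eventually hmax
  · exact ContinuousAt.comp (by simpa using hf.continuousAt) (hline 0).continuousAt

theorem laplacian_nonpos_of_isLocalMax [InnerProductSpace ℝ E] [FiniteDimensional ℝ E]
    {f : E → ℝ} {x : E} (hf : ContDiffAt ℝ 2 f x) (hmax : IsLocalMax f x) : Δ f x ≤ 0 := by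
  rw [laplacian_eq_iteratedFDeriv_stdOrthonormalBasis]
  refine Finset.sum_nonpos fun i _ ↦ ?_
  simpa [iteratedFDeriv_two_apply] using fderiv_fderiv_apply_self_nonpos_of_isLocalMax hf hmax _

end SecondDerivativeTest

section DivergenceTheorem

theorem trace_eq_inner_add_inner_mul_I {e : ℂ} (he : ‖e‖ = 1) (L : ℂ →ₗ[ℝ] ℂ) :
    LinearMap.trace ℝ ℂ L = ⟪L e, e⟫_ℝ + ⟪L (e * Complex.I), e * Complex.I⟫_ℝ := by
  let a : Circle := ⟨e, by simpa [Submonoid.unitSphere] using he⟩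
  have hrotation (z : ℂ) : rotation a z = e * z := rotation_apply a z
  rw [L.trace_eq_sum_inner (Complex.orthonormalBasisOneI.map (rotation a)), Fin.sum_univ_two,
    real_inner_comm, real_inner_comm (L _)]
  simp only [OrthonormalBasis.map_apply, Complex.coe_orthonormalBasisOneI, hrotation,
    Matrix.cons_val_zero, Matrix.cons_val_one, mul_one]

theorem hasFDerivAt_circleMap (c : ℂ) (p : ℝ × ℝ) :
    HasFDerivAt (fun q : ℝ × ℝ ↦ circleMap c q.1 q.2)
      ((ContinuousLinearMap.fst ℝ ℝ ℝ).smulRight (circleMap 0 1 p.2) +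
        (ContinuousLinearMap.snd ℝ ℝ ℝ).smulRight (circleMap 0 p.1 p.2 * Complex.I)) p := by
  have hangle : HasFDerivAt (fun q : ℝ × ℝ ↦ circleMap 0 1 q.2)
      ((ContinuousLinearMap.snd ℝ ℝ ℝ).smulRight (circleMap 0 1 p.2 * Complex.I)) p := by
    refine ((hasDerivAt_circleMap 0 1 p.2).hasFDerivAt.comp p hasFDerivAt_snd).congr_fderiv ?_
    ext <;> simp
  have hsmul := ((hasFDerivAt_fst (𝕜 := ℝ) (p := p)).fun_smul hangle).const_add c
  refine (hsmul.congr_fderiv ?_).congr_of_eventuallyEq (.of_forall fun q ↦ ?_)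
  · ext <;> simp [circleMap_zero, mul_assoc]
  · simp [circleMap]

theorem Ioo_prod_Ioo_ae_eq_Icc (a b : ℝ × ℝ) :
    (Ioo a.1 b.1 ×ˢ Ioo a.2 b.2 : Set (ℝ × ℝ)) =ᵐ[volume] Icc a b := by
  rw [Icc_prod_eq, Measure.volume_eq_prod]
  exact Measure.set_prod_ae_eq Ioo_ae_eq_Icc Ioo_ae_eq_Icc

theorem setIntegral_ball_eq_setIntegral_circleMap {E : Type*} [NormedAddCommGroup E]
    [NormedSpace ℝ E] (f : ℂ → E) (c : ℂ) (r : ℝ) :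
    ∫ z in ball c r, f z =
      ∫ p in Icc (0, -π) (r, π), p.1 • f (circleMap c p.1 p.2) := by
  have hsymm (p : ℝ × ℝ) : c + Complex.polarCoord.symm p = circleMap c p.1 p.2 := by
    simp [circleMap, Complex.exp_mul_I]
  have hrect : polarCoord.target ∩ Iio r ×ˢ univ = Ioo 0 r ×ˢ Ioo (-π) π := by
    rw [polarCoord_target, prod_inter_prod, Ioi_inter_Iio, inter_univ]
  calc ∫ z in ball c r, f z
    _ = ∫ p in polarCoord.target, p.1 • (ball c r).indicator f (circleMap c p.1 p.2) := by
      simp_rw [← integral_indicator measurableSet_ball, ← hsymm,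
        Complex.integral_comp_polarCoord_symm fun z ↦ (ball c r).indicator f (c + z),
        integral_add_left_eq_self]
    _ = ∫ p in polarCoord.target, (Iio r ×ˢ univ).indicator
          (fun p : ℝ × ℝ ↦ p.1 • f (circleMap c p.1 p.2)) p := by
      refine setIntegral_congr_fun polarCoord.open_target.measurableSet fun p hp ↦ ?_
      have hmem : circleMap c p.1 p.2 ∈ ball c r ↔ p.1 < r := by
        simp [abs_of_pos (show 0 < p.1 from hp.1), circleMap_sub_center, dist_eq_norm]
      simp [indicator, hmem]
    _ = ∫ p in Ioo 0 r ×ˢ Ioo (-π) π, p.1 • f (circleMap c p.1 p.2) := by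
      rw [setIntegral_indicator (measurableSet_Iio.prod .univ), hrect]
    _ = ∫ p in Icc (0, -π) (r, π), p.1 • f (circleMap c p.1 p.2) := by
      exact setIntegral_congr_set (Ioo_prod_Ioo_ae_eq_Icc (0, -π) (r, π))

theorem fderiv_radial_add_fderiv_angular {X : ℂ → ℂ} {c : ℂ} {p : ℝ × ℝ}
    (hX : DifferentiableAt ℝ X (circleMap c p.1 p.2)) :
    fderiv ℝ (fun q : ℝ × ℝ ↦ ⟪X (circleMap c q.1 q.2), circleMap 0 q.1 q.2⟫_ℝ) p (1, 0) +
      fderiv ℝ (fun q : ℝ × ℝ ↦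
        ⟪X (circleMap c q.1 q.2), circleMap 0 1 q.2 * Complex.I⟫_ℝ) p (0, 1) =
      p.1 * divergence X (circleMap c p.1 p.2) := by
  have hpolar : HasFDerivAt (fun q : ℝ × ℝ ↦ X (circleMap c q.1 q.2)) _ p :=
    hX.hasFDerivAt.comp p (hasFDerivAt_circleMap c p)
  have hangle : HasFDerivAt (fun q : ℝ × ℝ ↦ circleMap 0 1 q.2 * Complex.I)
      ((ContinuousLinearMap.snd ℝ ℝ ℝ).smulRight (-circleMap 0 1 p.2)) p := by
    refine (((hasDerivAt_circleMap 0 1 p.2).mul_const Complex.I).hasFDerivAt.comp p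
      hasFDerivAt_snd).congr_fderiv ?_
    ext <;> simp [mul_assoc]
  have hradius : circleMap 0 p.1 p.2 = p.1 • circleMap 0 1 p.2 := by simp [circleMap]
  rw [(hpolar.inner ℝ (hasFDerivAt_circleMap 0 p)).fderiv, (hpolar.inner ℝ hangle).fderiv,
    divergence, trace_eq_inner_add_inner_mul_I (e := circleMap 0 1 p.2) (by simp), hradius]
  simp only [Algebra.smul_mul_assoc, ContinuousLinearMap.comp_add, ContinuousLinearMap.comp_apply,
    ContinuousLinearMap.prod_apply, add_apply, ContinuousLinearMap.smulRight_apply,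
    ContinuousLinearMap.coe_fst', one_smul, ContinuousLinearMap.coe_snd', zero_smul, map_zero,
    add_zero, fderivInnerCLM_apply, inner_smul_right, map_smul, zero_add, smul_neg,
    inner_neg_right, inner_smul_left, ringHom_apply, ContinuousLinearMap.coe_coe]
  ring

theorem setIntegral_Icc_of_fderiv_add_fderiv_eq {f g h : ℝ × ℝ → ℝ} {a b : ℝ × ℝ} (hab : a ≤ b)
    (hf : ContinuousOn f (Icc a b)) (hg : ContinuousOn g (Icc a b)) (hh : ContinuousOn h (Icc a b))
    (hf' : ∀ p ∈ Ioo a.1 b.1 ×ˢ Ioo a.2 b.2, DifferentiableAt ℝ f p)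
    (hg' : ∀ p ∈ Ioo a.1 b.1 ×ˢ Ioo a.2 b.2, DifferentiableAt ℝ g p)
    (hsum : ∀ p ∈ Ioo a.1 b.1 ×ˢ Ioo a.2 b.2, fderiv ℝ f p (1, 0) + fderiv ℝ g p (0, 1) = h p) :
    ∫ p in Icc a b, h p =
      (((∫ x in a.1..b.1, g (x, b.2)) - ∫ x in a.1..b.1, g (x, a.2)) +
          ∫ y in a.2..b.2, f (b.1, y)) - ∫ y in a.2..b.2, f (a.1, y) := by
  have hae := Ioo_prod_Ioo_ae_eq_Icc a b
  have hmeas : MeasurableSet (Ioo a.1 b.1 ×ˢ Ioo a.2 b.2) :=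
    measurableSet_Ioo.prod measurableSet_Ioo
  have hint : IntegrableOn h (Ioo a.1 b.1 ×ˢ Ioo a.2 b.2) :=
    (hh.integrableOn_compact isCompact_Icc).congr_set_ae hae
  rw [setIntegral_congr_set hae.symm, ← setIntegral_congr_fun hmeas hsum, setIntegral_congr_set hae]
  exact integral_divergence_prod_Icc_of_hasFDerivAt_of_le f g (fderiv ℝ f) (fderiv ℝ g) a b hab
    hf hg (fun p hp ↦ (hf' p hp).hasFDerivAt) (fun p hp ↦ (hg' p hp).hasFDerivAt)
    ((hint.congr_fun (fun p hp ↦ (hsum p hp).symm) hmeas).congr_set_ae hae.symm)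

theorem setIntegral_ball_of_divergence_eq {X : ℂ → ℂ} {D : ℂ → ℝ} {c : ℂ} {r : ℝ} (hr : 0 ≤ r)
    (hX : ContinuousOn X (closedBall c r)) (hX' : ∀ z ∈ ball c r, DifferentiableAt ℝ X z)
    (hD : ContinuousOn D (closedBall c r)) (hdiv : ∀ z ∈ ball c r, divergence X z = D z) :
    ∫ z in ball c r, D z = ∫ θ in 0..2 * π, ⟪X (circleMap c r θ), circleMap 0 r θ⟫_ℝ := by
  let f (p : ℝ × ℝ) : ℝ := ⟪X (circleMap c p.1 p.2), circleMap 0 p.1 p.2⟫_ℝ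
  let g (p : ℝ × ℝ) : ℝ := ⟪X (circleMap c p.1 p.2), circleMap 0 1 p.2 * Complex.I⟫_ℝ
  have hpolar (c : ℂ) : Differentiable ℝ fun p : ℝ × ℝ ↦ circleMap c p.1 p.2 :=
    fun p ↦ (hasFDerivAt_circleMap c p).differentiableAt
  have hangle : Differentiable ℝ fun p : ℝ × ℝ ↦ circleMap 0 1 p.2 * Complex.I :=
    ((differentiable_circleMap 0 1).comp differentiable_snd).mul_const _
  have hclosedBall : MapsTo (fun p : ℝ × ℝ ↦ circleMap c p.1 p.2) (Icc (0, -π) (r, π))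
      (closedBall c r) := fun p hp ↦
    closedBall_subset_closedBall hp.2.1 (circleMap_mem_closedBall c hp.1.1 p.2)
  have hball : MapsTo (fun p : ℝ × ℝ ↦ circleMap c p.1 p.2) (Ioo 0 r ×ˢ Ioo (-π) π)
      (ball c r) := fun p hp ↦
    closedBall_subset_ball hp.1.2 (circleMap_mem_closedBall c hp.1.1.le p.2)
  have hXcont := hX.comp (hpolar c).continuous.continuousOn hclosedBall
  have hXdiff (p) (hp : p ∈ Ioo 0 r ×ˢ Ioo (-π) π) :
      DifferentiableAt ℝ (fun p : ℝ × ℝ ↦ X (circleMap c p.1 p.2)) p :=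
    DifferentiableAt.comp p (hX' _ (hball hp)) (hpolar c p)
  have hrectangle := setIntegral_Icc_of_fderiv_add_fderiv_eq (f := f) (g := g)
    (h := fun p ↦ p.1 • D (circleMap c p.1 p.2)) (a := (0, -π)) (b := (r, π))
    ⟨hr, by linarith [pi_pos]⟩
    (hXcont.inner (hpolar 0).continuous.continuousOn) (hXcont.inner hangle.continuous.continuousOn)
    (continuousOn_fst.smul (hD.comp (hpolar c).continuous.continuousOn hclosedBall))
    (fun p hp ↦ (hXdiff p hp).inner ℝ (hpolar 0 p)) (fun p hp ↦ (hXdiff p hp).inner ℝ (hangle p))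
    fun p hp ↦ by
      rw [fderiv_radial_add_fderiv_angular (hX' _ (hball hp)), hdiv _ (hball hp), smul_eq_mul]
  have hperiodic (R : ℝ) (c : ℂ) : circleMap c R π = circleMap c R (-π) := by
    simp [circleMap, Complex.exp_neg]
  have hshift : ∫ θ in -π..π, f (r, θ) = ∫ θ in 0..2 * π, f (r, θ) := by
    have hf : Function.Periodic (fun θ ↦ f (r, θ)) (2 * π) := fun θ ↦ by
      simp only [f, periodic_circleMap _ _ θ]
    simpa [two_mul] using hf.intervalIntegral_add_eq (-π) 0
  rw [setIntegral_ball_eq_setIntegral_circleMap, hrectangle, hshift]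
  simp [f, g, hperiodic]

end DivergenceTheorem

section DiskSolution

theorem lapC_eq_laplacian (u : ℂ → ℝ) : lapC u = Δ u := by
  ext x
  simp [laplacian_eq_iteratedFDeriv_complexPlane, iteratedFDeriv_two_apply, lapC]

/-- A solution `u` of `Δ u = -f(u)` on the disk of radius `r` about the origin, with zero boundary
values and continuous up to the boundary together with its gradient. Differentiability is imposed at
boundary points too, so that `∇ u` has its genuine value there. -/
structure IsDiskSolution (f : ℝ → ℝ) (r : ℝ) (u : ℂ → ℝ) : Prop where
  differentiableAt : ∀ z ∈ closedBall 0 r, DifferentiableAt ℝ u z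
  continuousOn_gradient : ContinuousOn (∇ u) (closedBall 0 r)
  contDiffAt : ∀ z ∈ ball 0 r, ContDiffAt ℝ 2 u z
  laplacian_eq : ∀ z ∈ ball 0 r, Δ u z = -f (u z)
  eq_zero : ∀ z ∈ sphere 0 r, u z = 0

namespace IsDiskSolution

variable {f : ℝ → ℝ} {r : ℝ} {u : ℂ → ℝ}

theorem continuousOn (h : IsDiskSolution f r u) : ContinuousOn u (closedBall 0 r) :=
  fun z hz ↦ (h.differentiableAt z hz).continuousAt.continuousWithinAt

theorem integral_norm_gradient_sq (h : IsDiskSolution f r u) (hr : 0 ≤ r) (hf : Continuous f) :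
    ∫ z in ball 0 r, ‖∇ u z‖ ^ 2 = ∫ z in ball 0 r, u z * f (u z) := by
  have hsq : ContinuousOn (fun z ↦ ‖∇ u z‖ ^ 2) (closedBall 0 r) :=
    h.continuousOn_gradient.norm.pow 2
  have huf : ContinuousOn (fun z ↦ u z * f (u z)) (closedBall 0 r) :=
    h.continuousOn.mul (hf.comp_continuousOn h.continuousOn)
  have hint {g : ℂ → ℝ} (hg : ContinuousOn g (closedBall 0 r)) : IntegrableOn g (ball 0 r) :=
    (hg.integrableOn_compact (isCompact_closedBall 0 r)).mono_set ball_subset_closedBall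
  have hgreen : ∫ z in ball 0 r, (‖∇ u z‖ ^ 2 - u z * f (u z)) = 0 := by
    rw [setIntegral_ball_of_divergence_eq (X := fun z ↦ u z • ∇ u z)
      (D := fun z ↦ ‖∇ u z‖ ^ 2 - u z * f (u z)) hr (h.continuousOn.smul h.continuousOn_gradient)
      (fun z hz ↦ ((h.contDiffAt z hz).differentiableAt two_ne_zero).smul
        (differentiableAt_gradient (h.contDiffAt z hz)))
      (hsq.sub huf)
      fun z hz ↦ by
        rw [divergence_smul_gradient (h.contDiffAt z hz), h.laplacian_eq z hz]
        ring]
    simp [h.eq_zero _ (circleMap_mem_sphere 0 hr _)]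
  rwa [integral_sub (hint hsq) (hint huf), sub_eq_zero] at hgreen

/-- Zero boundary values make the tangential derivative vanish along the boundary circle. -/
theorem inner_circleMap_gradient_sq (h : IsDiskSolution f r u) (hr : 0 ≤ r) (θ : ℝ) :
    ⟪circleMap 0 r θ, ∇ u (circleMap 0 r θ)⟫_ℝ ^ 2 = r ^ 2 * ‖∇ u (circleMap 0 r θ)‖ ^ 2 := by
  have hsphere := circleMap_mem_sphere 0 hr
  have htangent : ⟪circleMap 0 r θ * Complex.I, ∇ u (circleMap 0 r θ)⟫_ℝ = 0 := by
    have hderiv := (h.differentiableAt _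
      (sphere_subset_closedBall (hsphere θ))).hasFDerivAt.comp_hasDerivAt θ
        (hasDerivAt_circleMap 0 r θ)
    have hzero : u ∘ circleMap 0 r = fun _ ↦ 0 := funext fun t ↦ h.eq_zero _ (hsphere t)
    rw [hzero] at hderiv
    rw [inner_gradient_right]
    exact hderiv.unique (hasDerivAt_const θ 0)
  have hpythagoras (z w : ℂ) : ⟪z, w⟫_ℝ ^ 2 + ⟪z * Complex.I, w⟫_ℝ ^ 2 = ‖z‖ ^ 2 * ‖w‖ ^ 2 := by
    simp only [Complex.inner, Complex.mul_re, Complex.mul_im, Complex.conj_re, Complex.conj_im,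
      Complex.I_re, Complex.I_im, map_mul, Complex.sq_norm, Complex.normSq_apply]
    ring
  simpa [-Complex.inner, htangent] using
    hpythagoras (circleMap 0 r θ) (∇ u (circleMap 0 r θ))

theorem pohozaev_identity (h : IsDiskSolution f r u) (hr : 0 ≤ r) {F : ℝ → ℝ}
    (hF : ∀ t, HasDerivAt F (f t) t) (hF0 : F 0 = 0) :
    4 * ∫ z in ball 0 r, F (u z) =
      r ^ 2 * ∫ θ in 0..2 * π, ‖∇ u (circleMap 0 r θ)‖ ^ 2 := by
  have hFcont : Continuous F := continuous_iff_continuousAt.2 fun t ↦ (hF t).continuousAt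
  have hboundary (θ : ℝ) : ⟪pohozaevField F u (circleMap 0 r θ), circleMap 0 r θ⟫_ℝ =
      r ^ 2 / 2 * ‖∇ u (circleMap 0 r θ)‖ ^ 2 := by
    rw [pohozaevField, inner_add_left, real_inner_smul_left, real_inner_smul_left,
      real_inner_comm (circleMap 0 r θ) (∇ u _), ← sq, h.inner_circleMap_gradient_sq hr,
      real_inner_self_eq_norm_sq, h.eq_zero _ (circleMap_mem_sphere 0 hr θ), hF0,
      norm_circleMap_zero, sq_abs]
    ring
  have hdivergence : ∫ z in ball 0 r, 2 * F (u z) =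
      ∫ θ in 0..2 * π, ⟪pohozaevField F u (circleMap 0 r θ), circleMap 0 r θ⟫_ℝ :=
    setIntegral_ball_of_divergence_eq hr
      (continuousOn_pohozaevField h.continuousOn h.continuousOn_gradient hFcont)
      (fun z hz ↦ differentiableAt_pohozaevField (h.contDiffAt z hz) (hF _).differentiableAt)
      (continuousOn_const.mul (hFcont.comp_continuousOn h.continuousOn)) fun z hz ↦ by
        rw [divergence_pohozaevField (h.contDiffAt z hz) (hF _), h.laplacian_eq z hz,
          Complex.finrank_real_complex]
        norm_num
  simp_rw [hboundary, intervalIntegral.integral_const_mul, integral_const_mul] at hdivergence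
  linarith

end IsDiskSolution

end DiskSolution

section Dilation

variable {E : Type*} [NormedAddCommGroup E] [InnerProductSpace ℝ E]

theorem gradient_const_mul_comp_smul [CompleteSpace E] (c a : ℝ) (u : E → ℝ) (x : E) :
    ∇ (fun y ↦ c * u (a • y)) x = (c * a) • ∇ u (a • x) := by
  have hfderiv : fderiv ℝ (fun y ↦ c * u (a • y)) x = (c * a) • fderiv ℝ u (a • x) := by
    rw [← smul_smul, ← fderiv_comp_smul]
    exact congrFun (fderiv_const_smul_field (𝕜 := ℝ) (f := fun y ↦ u (a • y)) c) x
  simp [gradient, hfderiv]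

variable [FiniteDimensional ℝ E]

theorem laplacian_comp_smul (a : ℝ) (u : E → ℝ) (x : E) :
    Δ (fun y ↦ u (a • y)) x = a ^ 2 * Δ u (a • x) := by
  have hfderiv : fderiv ℝ (fun y ↦ u (a • y)) = a • fun y ↦ fderiv ℝ u (a • y) :=
    funext fun y ↦ fderiv_comp_smul a
  have hfderiv2 : fderiv ℝ (fderiv ℝ fun y ↦ u (a • y)) x =
      a • a • fderiv ℝ (fderiv ℝ u) (a • x) := by
    rw [hfderiv, ← fderiv_comp_smul]
    exact congrFun (fderiv_const_smul_field (𝕜 := ℝ) (f := fun y ↦ fderiv ℝ u (a • y)) a) x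
  simp [laplacian_eq_iteratedFDeriv_stdOrthonormalBasis, iteratedFDeriv_two_apply, hfderiv2,
    Finset.mul_sum, sq, mul_assoc]

variable [MeasurableSpace E] [BorelSpace E]

theorem setIntegral_norm_gradient_sq_const_mul_comp_inv_smul (μ : Measure E) [μ.IsAddHaarMeasure]
    (c : ℝ) {a : ℝ} (ha : 0 < a) (u : E → ℝ) (s : Set E) :
    ∫ x in a • s, ‖∇ (fun y ↦ c * u (a⁻¹ • y)) x‖ ^ 2 ∂μ =
      c ^ 2 * a ^ (Module.finrank ℝ E - 2 : ℤ) * ∫ x in s, ‖∇ u x‖ ^ 2 ∂μ := by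
  have hscale := Measure.setIntegral_comp_smul_of_pos μ
    (fun x ↦ ‖∇ (fun y ↦ c * u (a⁻¹ • y)) x‖ ^ 2) s ha
  have hgrad (x : E) : ‖∇ (fun y ↦ c * u (a⁻¹ • y)) (a • x)‖ ^ 2 =
      c ^ 2 * (a ^ 2)⁻¹ * ‖∇ u x‖ ^ 2 := by
    rw [gradient_const_mul_comp_smul, inv_smul_smul₀ ha.ne', norm_smul, norm_mul, norm_inv,
      mul_pow, mul_pow, inv_pow, norm_eq_abs, norm_eq_abs, sq_abs, sq_abs]
  simp_rw [hgrad, integral_const_mul, smul_eq_mul] at hscale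
  rw [zpow_sub₀ ha.ne', zpow_natCast]
  field_simp at hscale ⊢
  exact hscale.symm

end Dilation

section Torsion

/-- The dilation of `u` by the factor `a`, with the amplitude that makes it preserve the equation
`Δ u = -u ^ γ`. -/
noncomputable def torsionDilation (γ a : ℝ) (u : ℂ → ℝ) (z : ℂ) : ℝ :=
  a ^ (2 / (1 - γ)) * u (a⁻¹ • z)

namespace IsTorsionFnC

variable {γ : ℝ} {O O' : Set ℂ} {u v w : ℂ → ℝ}

theorem contDiffAt (hu : IsTorsionFnC γ O u) (hO : IsOpen O) {x : ℂ} (hx : x ∈ O) :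
    ContDiffAt ℝ 2 u x :=
  hu.2.2.1.contDiffAt (hO.mem_nhds hx)

theorem laplacian_eq (hu : IsTorsionFnC γ O u) {x : ℂ} (hx : x ∈ O) : Δ u x = -u x ^ γ :=
  lapC_eq_laplacian u ▸ hu.2.2.2.1 x hx

/-- The second derivative test would give `t ≤ t ^ γ`, which is absurd. -/
theorem not_isLocalMax_sub_smul (hγ : γ < 1) (hO : IsOpen O) (hO' : IsOpen O')
    (hv : IsTorsionFnC γ O v) (hw : IsTorsionFnC γ O' w) {x : ℂ} (hx : x ∈ O) (hx' : x ∈ O')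
    {t : ℝ} (ht : 1 < t) (hvx : v x = t * w x) : ¬ IsLocalMax (v - t • w) x := by
  intro hmax
  have hwpos : 0 < w x := hw.2.2.2.2.1 x hx'
  have hvC2 := hv.contDiffAt hO hx
  have hwC2 := hw.contDiffAt hO' hx'
  have htwC2 : ContDiffAt ℝ 2 (t • w) x := hwC2.const_smul t
  have hlap : Δ (v - t • w) x ≤ 0 := laplacian_nonpos_of_isLocalMax (hvC2.sub htwC2) hmax
  rw [hvC2.laplacian_sub htwC2, laplacian_smul t hwC2, hv.laplacian_eq hx, hw.laplacian_eq hx',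
    hvx, mul_rpow (by linarith) hwpos.le, smul_eq_mul] at hlap
  have hle : t ≤ t ^ γ := le_of_mul_le_mul_right (by linarith) (rpow_pos_of_pos hwpos γ)
  exact hle.not_gt (rpow_lt_self_of_one_lt ht hγ)

theorem le_of_closure_subset (hγ : γ < 1) (hO : IsOpen O) (hbdd : Bornology.IsBounded O)
    (hO' : IsOpen O') (hsub : closure O ⊆ O') (hv : IsTorsionFnC γ O v)
    (hw : IsTorsionFnC γ O' w) {x : ℂ} (hx : x ∈ O) : v x ≤ w x := by
  have hwpos : ∀ y ∈ closure O, 0 < w y := fun y hy ↦ hw.2.2.2.2.1 y (hsub hy)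
  have hcont : ContinuousOn (fun y ↦ v y / w y) (closure O) :=
    hv.1.div (hw.1.mono (hsub.trans subset_closure)) fun y hy ↦ (hwpos y hy).ne'
  obtain ⟨y, hy, hmax⟩ := hbdd.isCompact_closure.exists_isMaxOn ⟨x, subset_closure hx⟩ hcont
  by_contra! hlt
  set t := v y / w y with ht
  have ht1 : 1 < t :=
    ((one_lt_div (hwpos x (subset_closure hx))).2 hlt).trans_le (hmax (subset_closure hx))
  have hvy : v y = t * w y := (div_mul_cancel₀ _ (hwpos y hy).ne').symm
  have hyO : y ∈ O := by
    by_contra hyO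
    have hzero : v y = 0 := hv.2.2.2.2.2 y ⟨hy, by rwa [hO.interior_eq]⟩
    rw [ht, hzero, zero_div] at ht1
    exact zero_lt_one.not_gt ht1
  refine not_isLocalMax_sub_smul hγ hO hO' hv hw hyO (hsub hy) ht1 hvy ?_
  filter_upwards [hO.mem_nhds hyO] with z hz
  have hvz : v z ≤ t * w z :=
    (div_le_iff₀ (hwpos z (subset_closure hz))).1 (hmax (subset_closure hz))
  simpa [hvy] using hvz

theorem dilation (hu : IsTorsionFnC γ O u) (hγ : γ < 1) (hO : IsOpen O) {a : ℝ}
    (ha : 0 < a) : IsTorsionFnC γ (a • O) (torsionDilation γ a u) := by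
  have hmem (s : Set ℂ) {z : ℂ} (hz : z ∈ a • s) : a⁻¹ • z ∈ s :=
    (mem_smul_set_iff_inv_smul_mem₀ ha.ne' s z).1 hz
  have hcoef : 0 < a ^ (2 / (1 - γ)) := rpow_pos_of_pos ha _
  have hcontDiff {n : WithTop ℕ∞} {s : Set ℂ} (h : ContDiffOn ℝ n u s) :
      ContDiffOn ℝ n (torsionDilation γ a u) (a • s) :=
    contDiffOn_const.mul (h.comp (contDiff_const_smul a⁻¹).contDiffOn fun _ ↦ hmem s)
  rw [IsTorsionFnC, closure_smul₀]
  refine ⟨(hcontDiff hu.2.1).continuousOn, hcontDiff hu.2.1, hcontDiff hu.2.2.1, fun z hz ↦ ?_,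
    fun z hz ↦ mul_pos hcoef (hu.2.2.2.2.1 _ (hmem O hz)), fun z hz ↦ ?_⟩
  · have hC2 : ContDiffAt ℝ 2 (fun y ↦ u (a⁻¹ • y)) z :=
      (hu.contDiffAt hO (hmem O hz)).comp z (contDiff_const_smul a⁻¹).contDiffAt
    have hexp : 2 / (1 - γ) - 2 = 2 / (1 - γ) * γ := by
      field_simp [(sub_pos.2 hγ).ne']
      ring
    have hlap := laplacian_smul (a ^ (2 / (1 - γ))) hC2
    rw [laplacian_comp_smul, hu.laplacian_eq (hmem O hz)] at hlap
    rw [lapC_eq_laplacian]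
    refine hlap.trans ?_
    rw [torsionDilation, mul_rpow hcoef.le (hu.2.2.2.2.1 _ (hmem O hz)).le,
      ← rpow_mul ha.le, ← hexp, rpow_sub ha, Real.rpow_two, smul_eq_mul, inv_pow]
    ring
  · rw [frontier, closure_smul₀, interior_smul₀ ha.ne', ← smul_set_sdiff₀ ha.ne'] at hz
    rw [torsionDilation, hu.2.2.2.2.2 _ (hmem _ hz), mul_zero]

theorem eqOn (hγ : γ < 1) (hO : IsOpen O) (hbdd : Bornology.IsBounded O)
    (hstar : ∀ a : ℝ, 1 < a → closure O ⊆ a • O) (hv : IsTorsionFnC γ O v)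
    (hw : IsTorsionFnC γ O w) : EqOn v w O := by
  suffices hle : ∀ {v w : ℂ → ℝ}, IsTorsionFnC γ O v → IsTorsionFnC γ O w → ∀ x ∈ O, v x ≤ w x from
    fun x hx ↦ le_antisymm (hle hv hw x hx) (hle hw hv x hx)
  intro v w hv hw x hx
  have hlim : Tendsto (fun a : ℝ ↦ torsionDilation γ a w x) (𝓝[>] 1) (𝓝 (w x)) := by
    have hcont : ContinuousAt (fun a : ℝ ↦ torsionDilation γ a w x) 1 :=
      (continuousAt_id.rpow_const (Or.inl one_ne_zero)).mul
        (ContinuousAt.comp (by simpa using (hw.contDiffAt hO hx).continuousAt)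
          ((continuousAt_inv₀ one_ne_zero).smul continuousAt_const))
    simpa [torsionDilation] using hcont.tendsto.mono_left nhdsWithin_le_nhds
  refine ge_of_tendsto hlim (eventually_mem_nhdsWithin.mono fun a (ha : 1 < a) ↦ ?_)
  have ha0 : 0 < a := one_pos.trans ha
  exact le_of_closure_subset hγ hO hbdd (hO.smul₀ ha0.ne') (hstar a ha) hv
    (hw.dilation hγ hO ha0) hx

theorem eqOn_ball {r : ℝ} (hγ : γ < 1) (hr : 0 < r) (hv : IsTorsionFnC γ (ball 0 r) v)
    (hw : IsTorsionFnC γ (ball 0 r) w) : EqOn v w (ball 0 r) := by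
  refine eqOn hγ isOpen_ball isBounded_ball (fun a ha ↦ ?_) hv hw
  rw [_root_.smul_ball (by positivity), closure_ball _ hr.ne', smul_zero]
  exact closedBall_subset_ball (by rw [norm_of_nonneg (by linarith)]; nlinarith)

theorem isDiskSolution {r : ℝ} (hr : 0 < r) (hu : IsTorsionFnC γ (ball 0 r) u)
    (hdiff : ∀ z ∈ sphere 0 r, DifferentiableAt ℝ u z) : IsDiskSolution (· ^ γ) r u := by
  have hdiff' : ∀ z ∈ closedBall 0 r, DifferentiableAt ℝ u z := fun z hz ↦ by
    rw [← ball_union_sphere] at hz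
    exact hz.elim (fun hz ↦ (hu.contDiffAt isOpen_ball hz).differentiableAt two_ne_zero) (hdiff z)
  have hunique : UniqueDiffOn ℝ (closedBall (0 : ℂ) r) :=
    uniqueDiffOn_convex (convex_closedBall 0 r)
      ⟨0, by simpa [interior_closedBall _ hr.ne'] using hr⟩
  have hC1 : ContDiffOn ℝ 1 u (closedBall 0 r) := by
    simpa [closure_ball _ hr.ne'] using hu.2.1
  have hfderiv : ContinuousOn (fderiv ℝ u) (closedBall 0 r) :=
    (hC1.continuousOn_fderivWithin hunique le_rfl).congr fun z hz ↦
      ((hdiff' z hz).fderivWithin (hunique z hz)).symm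
  exact {
    differentiableAt := hdiff'
    continuousOn_gradient := (toDual ℝ ℂ).symm.continuous.comp_continuousOn hfderiv
    contDiffAt := fun z hz ↦ hu.contDiffAt isOpen_ball hz
    laplacian_eq := fun z hz ↦ hu.laplacian_eq hz
    eq_zero := fun z hz ↦ hu.2.2.2.2.2 z (by rwa [frontier_ball _ hr.ne']) }

theorem integral_norm_gradient_sq_eq_rpow_mul {r s : ℝ} (hγ : γ < 1) (hr : 0 < r) (hs : 0 < s)
    (hu : IsTorsionFnC γ (ball 0 r) u) (hv : IsTorsionFnC γ (ball 0 s) v) :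
    ∫ z in ball 0 s, ‖∇ v z‖ ^ 2 = (s / r) ^ (4 / (1 - γ)) * ∫ z in ball 0 r, ‖∇ u z‖ ^ 2 := by
  have ha : 0 < s / r := div_pos hs hr
  have hball : (s / r) • ball (0 : ℂ) r = ball 0 s := by
    rw [_root_.smul_ball ha.ne', smul_zero, norm_of_nonneg ha.le, div_mul_cancel₀ _ hr.ne']
  have hdilation : IsTorsionFnC γ (ball 0 s) (torsionDilation γ (s / r) u) :=
    hball ▸ hu.dilation hγ isOpen_ball ha
  have hgrad : ∀ z ∈ ball 0 s, ‖∇ v z‖ ^ 2 = ‖∇ (torsionDilation γ (s / r) u) z‖ ^ 2 :=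
    fun z hz ↦ by
      rw [((eqOn_ball hγ hs hv hdilation).eventuallyEq_of_mem
        (isOpen_ball.mem_nhds hz)).gradient_eq]
  have hamplitude : ((s / r) ^ (2 / (1 - γ))) ^ 2 = (s / r) ^ (4 / (1 - γ)) := by
    rw [← rpow_mul_natCast ha.le]
    congr 1
    push_cast
    ring
  rw [setIntegral_congr_fun measurableSet_ball hgrad, ← hball]
  refine (setIntegral_norm_gradient_sq_const_mul_comp_inv_smul volume _ ha u _).trans ?_
  rw [Complex.finrank_real_complex, hamplitude]
  simp

theorem integral_norm_gradient_sq_eq_boundary {r : ℝ} (hγ : 0 ≤ γ) (hr : 0 < r)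
    (hu : IsTorsionFnC γ (ball 0 r) u) (hdiff : ∀ z ∈ sphere 0 r, DifferentiableAt ℝ u z) :
    ∫ z in ball 0 r, ‖∇ u z‖ ^ 2 =
      (1 + γ) / 4 * (r ^ 2 * ∫ θ in 0..2 * π, ‖∇ u (circleMap 0 r θ)‖ ^ 2) := by
  have hdisk := hu.isDiskSolution hr hdiff
  have hprimitive (t : ℝ) : HasDerivAt (fun t ↦ t ^ (1 + γ) / (1 + γ)) (t ^ γ) t := by
    have h := (hasDerivAt_rpow_const (x := t) (p := 1 + γ)
      (Or.inr (by linarith))).div_const (1 + γ)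
    rwa [add_sub_cancel_left, mul_div_cancel_left₀ _ (by linarith)] at h
  have hpow : ∀ z ∈ ball 0 r, u z * u z ^ γ = u z ^ (1 + γ) := fun z hz ↦
    (rpow_one_add' (hu.2.2.2.2.1 z hz).le (by linarith)).symm
  have hpohozaev := hdisk.pohozaev_identity hr.le hprimitive
    (by rw [zero_rpow (by linarith), zero_div])
  rw [integral_div] at hpohozaev
  rw [hdisk.integral_norm_gradient_sq hr.le (continuous_rpow_const hγ),
    setIntegral_congr_fun measurableSet_ball hpow, ← hpohozaev]
  field_simp

end IsTorsionFnC

theorem torsional_rigidity_derivative_disks_general {γ r : ℝ} (hγ0 : 0 ≤ γ) (hγ1 : γ < 1)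
    (hr : 0 < r) {U : ℝ → ℂ → ℝ} (hdiff : ∀ z ∈ sphere (0 : ℂ) r, DifferentiableAt ℝ (U r) z)
    (htor : ∀ᶠ s in 𝓝 r, IsTorsionFnC γ (ball 0 s) (U s)) :
    HasDerivAt (fun s ↦ ∫ z in ball (0 : ℂ) s, ‖∇ (U s) z‖ ^ 2)
      ((1 + γ) / (1 - γ) * r * ∫ θ in 0..2 * π, ‖∇ (U r) (circleMap 0 r θ)‖ ^ 2) r := by
  have hur := htor.self_of_nhds
  have hscaling : (fun s ↦ ∫ z in ball (0 : ℂ) s, ‖∇ (U s) z‖ ^ 2) =ᶠ[𝓝 r]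
      fun s ↦ (s / r) ^ (4 / (1 - γ)) * ∫ z in ball 0 r, ‖∇ (U r) z‖ ^ 2 := by
    filter_upwards [htor, lt_mem_nhds hr] with s hus hs
    exact hur.integral_norm_gradient_sq_eq_rpow_mul hγ1 hr hs hus
  have hpower : HasDerivAt (fun s ↦ (s / r) ^ (4 / (1 - γ))) (4 / (1 - γ) / r) r := by
    have h := ((hasDerivAt_id r).div_const r).rpow_const (p := 4 / (1 - γ))
      (Or.inl (div_ne_zero hr.ne' hr.ne'))
    simpa [div_self hr.ne', mul_comm, div_eq_mul_inv] using h
  refine ((hpower.mul_const _).congr_of_eventuallyEq hscaling).congr_deriv ?_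
  rw [hur.integral_norm_gradient_sq_eq_boundary hγ0 hr hdiff]
  field_simp

end Torsion

end Development

/-- First variation of the `γ`-torsional rigidity along the family of disks `B(0,r)`,
`0 < r < R ≤ ∞`. -/
theorem torsional_rigidity_derivative_disks
    (γ : ℝ) (hγ0 : 0 ≤ γ) (hγ1 : γ < 1) (R : ℝ≥0∞) (hR : 0 < R)
    (U : ℝ → ℂ → ℝ)
    (hreg : ContDiffOn ℝ 1 (fun p : ℝ × ℂ => U p.1 p.2)
      {p : ℝ × ℂ | 0 < p.1 ∧ ENNReal.ofReal p.1 < R})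
    (htor : ∀ r : ℝ, 0 < r → ENNReal.ofReal r < R →
      IsTorsionFnC γ (Metric.ball (0 : ℂ) r) (U r)) :
    ∀ r : ℝ, 0 < r → ENNReal.ofReal r < R →
      HasDerivAt (fun s : ℝ => ∫ z in Metric.ball (0 : ℂ) s, ‖gradient (U s) z‖ ^ 2)
        (((1 + γ) / (1 - γ)) * r *
          ∫ θ in (0 : ℝ)..(2 * π), ‖gradient (U r) ((r : ℂ) * Complex.exp (θ * Complex.I))‖ ^ 2)
        r := by
  intro r hr hrR
  have hsmooth : ContDiff ℝ 1 (U r) := contDiffOn_univ.1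
    (hreg.comp (contDiff_prodMk_right r).contDiffOn fun _ _ ↦ ⟨hr, hrR⟩)
  have hnear : ∀ᶠ s in nhds r, IsTorsionFnC γ (Metric.ball 0 s) (U s) := by
    filter_upwards [lt_mem_nhds hr, ENNReal.continuous_ofReal.continuousAt.eventually_lt_const hrR]
      with s hs hsR using htor s hs hsR
  simpa only [circleMap_zero] using torsional_rigidity_derivative_disks_general hγ0 hγ1 hr
    (fun z _ ↦ hsmooth.differentiable one_ne_zero z) hnear
end
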